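/- For every integer n ≥ 1 the dual canonical basis elements satisfy the product expansions B[n,0,0,n−1]·B[1,0,0,1] = q^{3−4n} B[n+1,0,0,n] + q^{4−4n} B[n,1,1,n−1] and B[1,0,0,1]·B[n,0,0,n−1] = q^{1−4n} B[n+1,0,0,n] + q^{−4n} B[n,1,1,n−1]. -/

import Mathlib

noncomputable section

abbrev F : Type := RatFunc ℚ

/-- The deformation parameter `q`. -/
def qq : F := RatFunc.X

/-- The quantum integer `[3] = q² + 1 + q⁻²`. -/
def box3 : F := qq ^ 2 + 1 + (qq⁻¹) ^ 2

/-- The generators `E₁, E₂` of the free algebra. -/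
def gen (i : Fin 2) : FreeAlgebra F (Fin 2) := FreeAlgebra.ι F i

/-- The quantized Serre relations. -/
inductive SerreRel : FreeAlgebra F (Fin 2) → FreeAlgebra F (Fin 2) → Prop
  | rel1 : SerreRel
      (gen 0 ^ 3 * gen 1 - box3 • (gen 0 ^ 2 * gen 1 * gen 0)
        + box3 • (gen 0 * gen 1 * gen 0 ^ 2) - gen 1 * gen 0 ^ 3) 0
  | rel2 : SerreRel
      (gen 1 ^ 3 * gen 0 - box3 • (gen 1 ^ 2 * gen 0 * gen 1)
        + box3 • (gen 1 * gen 0 * gen 1 ^ 2) - gen 0 * gen 1 ^ 3) 0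

/-- `U = U_q(𝔫)`, the free algebra on `E₁, E₂` modulo the quantized Serre relations. -/
abbrev U : Type := RingQuot SerreRel

def E1 : U := RingQuot.mkAlgHom F SerreRel (gen 0)
def E2 : U := RingQuot.mkAlgHom F SerreRel (gen 1)

/-- `A = (1/(q+q⁻¹))(E₂E₁ − q⁻²E₁E₂)`. -/
def Aelt : U := (qq + qq⁻¹)⁻¹ • (E2 * E1 - (qq⁻¹) ^ 2 • (E1 * E2))

def v0 : U := E1
def v1 : U := Aelt * v0 - v0 * Aelt
def v2 : U := Aelt * v1 - v1 * Aelt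
def v3 : U := Aelt * v2 - v2 * Aelt

/-- `uᵢ = (1 − q⁻²)⁻²ⁱ vᵢ`. -/
def u0 : U := v0
def u1 : U := ((1 - (qq⁻¹) ^ 2)⁻¹) ^ 2 • v1
def u2 : U := ((1 - (qq⁻¹) ^ 2)⁻¹) ^ 4 • v2
def u3 : U := ((1 - (qq⁻¹) ^ 2)⁻¹) ^ 6 • v3

/-- `p₁ = u₃u₁ − q²u₂²`. -/
def p1 : U := u3 * u1 - qq ^ 2 • u2 ^ 2
/-- `p₀ = u₂u₀ − q²u₁²`. -/
def p0 : U := u2 * u0 - qq ^ 2 • u1 ^ 2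

/-- `S`, the subalgebra of `U` generated by `u₀, u₁, u₂, u₃`. -/
abbrev Sgen : Subalgebra F U := Algebra.adjoin F ({u0, u1, u2, u3} : Set U)

def us0 : Sgen := ⟨u0, Algebra.subset_adjoin (by simp)⟩
def us1 : Sgen := ⟨u1, Algebra.subset_adjoin (by simp)⟩
def us2 : Sgen := ⟨u2, Algebra.subset_adjoin (by simp)⟩
def us3 : Sgen := ⟨u3, Algebra.subset_adjoin (by simp)⟩

/-- `p₁ = u₃u₁ − q²u₂²` as an element of `S`. -/
def ps1 : Sgen := us3 * us1 - qq ^ 2 • us2 ^ 2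
/-- `p₀ = u₂u₀ − q²u₁²` as an element of `S`. -/
def ps0 : Sgen := us2 * us0 - qq ^ 2 • us1 ^ 2

/-- Index quadruples `a = (a₃, a₂, a₁, a₀)`. -/
abbrev Idx : Type := ℕ × ℕ × ℕ × ℕ

/-- The PBW monomial `u₃^{a₃}u₂^{a₂}u₁^{a₁}u₀^{a₀}`. -/
def mon (a : Idx) : Sgen := us3 ^ a.1 * us2 ^ a.2.1 * us1 ^ a.2.2.1 * us0 ^ a.2.2.2

/-- `b(a) = C(a₃,2)+C(a₂,2)+C(a₁,2)+C(a₀,2)`. -/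
def bexp (a : Idx) : ℕ :=
  Nat.choose a.1 2 + Nat.choose a.2.1 2 + Nat.choose a.2.2.1 2 + Nat.choose a.2.2.2 2

/-- The dual PBW basis element `E[a] = q^{b(a)} u₃^{a₃}u₂^{a₂}u₁^{a₁}u₀^{a₀}`. -/
def Ee (a : Idx) : Sgen := qq ^ bexp a • mon a

/-- `N(a) = (a₃+a₂+a₁+a₀)² − 7a₃ − 5a₂ − 3a₁ − a₀`. -/
def Nnum (a : Idx) : ℤ :=
  ((a.1 : ℤ) + a.2.1 + a.2.2.1 + a.2.2.2) ^ 2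
    - 7 * a.1 - 5 * a.2.1 - 3 * a.2.2.1 - a.2.2.2

/-- `a ⊴ b` iff `b − a ∈ ℕ·(−1,2,−1,0) + ℕ·(0,−1,2,−1)`. -/
def tri (a b : Idx) : Prop :=
  ∃ s r : ℕ,
    (b.1 : ℤ) = a.1 - s ∧
    (b.2.1 : ℤ) = a.2.1 + 2 * s - r ∧
    (b.2.2.1 : ℤ) = a.2.2.1 - s + 2 * r ∧
    (b.2.2.2 : ℤ) = a.2.2.2 - r

/-- `S(a) = {b ∈ ℕ⁴ : a ⊴ b and a ≠ b}`. -/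
def Sset (a : Idx) : Set Idx := {b | tri a b ∧ a ≠ b}

/-- Condition (i): `B[a] − E[a] ∈ Σ_{b ∈ S(a)} qℤ[q]·E[b]`. -/
def cond1 (B : Idx → Sgen) (a : Idx) : Prop :=
  ∃ φ : Idx →₀ Polynomial ℤ,
    (↑φ.support : Set Idx) ⊆ Sset a ∧
    B a - Ee a =
      φ.sum fun b p => (qq * Polynomial.eval₂ (Int.castRingHom F) qq p) • Ee b

/-- Hypotheses on the bar involution of coefficients `bar : q ↦ q⁻¹` and on the
anti-automorphism `σ` of `S`: `σ` is an additive, anti-multiplicative bijection with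
`σ(c(q)·x) = c(q⁻¹)·σ(x)` and `σ(uᵢ) = q^{2i}uᵢ`. -/
def SigmaHyp (bar : F →+* F) (σ : Sgen → Sgen) : Prop :=
  bar qq = qq⁻¹ ∧
  Function.Bijective σ ∧
  (∀ x y : Sgen, σ (x + y) = σ x + σ y) ∧
  (∀ x y : Sgen, σ (x * y) = σ y * σ x) ∧
  (∀ (c : F) (x : Sgen), σ (c • x) = bar c • σ x) ∧
  σ us0 = us0 ∧ σ us1 = qq ^ 2 • us1 ∧ σ us2 = qq ^ 4 • us2 ∧ σ us3 = qq ^ 6 • us3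

/-- The defining properties of the dual canonical basis `B`: for every `a ∈ ℕ⁴`,
`B[a] − E[a] ∈ Σ_{b ∈ S(a)} qℤ[q]·E[b]` and `σ(B[a]) = q^{−N(a)}B[a]`. -/
def DCB (bar : F →+* F) (σ : Sgen → Sgen) (B : Idx → Sgen) : Prop :=
  ∀ a : Idx, cond1 B a ∧ σ (B a) = qq ^ (-Nnum a) • B a

/-- Extension of `B` to integer quadruples by the convention that `B[a] = 0` whenever
some coordinate of `a` is negative. -/
def Bz (B : Idx → Sgen) (a : ℤ × ℤ × ℤ × ℤ) : Sgen :=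
  if 0 ≤ a.1 ∧ 0 ≤ a.2.1 ∧ 0 ≤ a.2.2.1 ∧ 0 ≤ a.2.2.2 then
    B (a.1.toNat, a.2.1.toNat, a.2.2.1.toNat, a.2.2.2.toNat)
  else 0

/-!
Put `z = u₃u₀ - q²u₂u₁`. The Serre relations give an element `G` of weight `2δ` that commutes with
`A` and acts on `E₁` as `(ad A)²`; comparing `ad G` with `(ad A)²` on `E₁·[A,E₁] = q⁻²[A,E₁]·E₁`
yields all straightening relations among the `uᵢ`. They show that `p₁p₀` commutes with `z`, and the
Chebyshev-type recursion in these two commuting elements starting from `u₃` defines elements `Xₘ`.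
By induction each `Xₘ` is unitriangular at `(m+1,0,0,m)` and a `σ`-eigenvector of the right weight.
So is the element `Yₘ`, a power of `q` times `p₁p₀Xₘ₋₁`, at `(m+1,1,1,m)`. These two properties
characterise the dual canonical basis, because a nonzero element of `qℤ[q]` is not fixed by
`q ↦ q⁻¹`; hence `Xₘ = B[m+1,0,0,m]`, `Yₘ = B[m+1,1,1,m]` and `z = B[1,0,0,1]`. The product formula
for `Xₘz` is the recursion itself, and the one for `zXₘ` follows from the commutator of `Xₘ` and
`z`.
-/

/-! ### Commutation of the quantum minors -/

/-- `x` and `y` commute up to the scalar `c`. -/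
def QCommute {K R : Type*} [CommRing K] [Ring R] [Algebra K R] (c : K) (x y : R) : Prop :=
  x * y = c • (y * x)

namespace QCommute

section CommRing

variable {K R : Type*} [CommRing K] [Ring R] [Algebra K R] {c d : K} {x y z : R}

theorem eq (h : QCommute c x y) : x * y = c • (y * x) := h

theorem congr_coeff (h : QCommute c x y) (hcd : c = d) : QCommute d x y := hcd ▸ h

theorem left_comm (h : QCommute c x y) (w : R) : x * (y * w) = c • (y * (x * w)) := by
  rw [← mul_assoc, h.eq, smul_mul_assoc, mul_assoc]

theorem mul_left (hx : QCommute c x z) (hy : QCommute d y z) : QCommute (c * d) (x * y) z := by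
  rw [QCommute, mul_assoc, hy.eq, mul_smul_comm, hx.left_comm, smul_smul, mul_comm d]

theorem mul_right (hy : QCommute c x y) (hz : QCommute d x z) : QCommute (c * d) x (y * z) := by
  rw [QCommute, hy.left_comm, hz.eq, mul_smul_comm, smul_smul, mul_assoc]

theorem sub_right (hy : QCommute c x y) (hz : QCommute c x z) : QCommute c x (y - z) := by
  rw [QCommute, mul_sub, hy.eq, hz.eq, sub_mul, smul_sub]

theorem smul_right (h : QCommute c x y) (a : K) : QCommute c x (a • y) := by
  rw [QCommute, mul_smul_comm, h.eq, smul_mul_assoc, smul_comm]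

theorem pow_left (h : QCommute c x y) : ∀ n : ℕ, QCommute (c ^ n) (x ^ n) y
  | 0 => by simp [QCommute]
  | n + 1 => by simpa only [pow_succ] using (h.pow_left n).mul_left h

theorem pow_right (h : QCommute c x y) : ∀ n : ℕ, QCommute (c ^ n) x (y ^ n)
  | 0 => by simp [QCommute]
  | n + 1 => by simpa only [pow_succ] using (h.pow_right n).mul_right h

theorem op_iff : QCommute c (MulOpposite.op x) (MulOpposite.op y) ↔ QCommute c y x := by
  simp only [QCommute, ← MulOpposite.op_mul, ← MulOpposite.op_smul, MulOpposite.op_inj]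

end CommRing

variable {K R : Type*} [Field K] [Ring R] [Algebra K R] {c : K} {x y : R}

theorem symm (h : QCommute c x y) (hc : c ≠ 0) : QCommute c⁻¹ y x := by
  rw [QCommute, h.eq, inv_smul_smul₀ hc]

end QCommute

/-- The straightening relations between the root vectors `u₀, u₁, u₂, u₃`, rewriting every product
into the order `u₃, u₂, u₁, u₀` of the PBW monomials. -/
structure StraighteningRelations {K R : Type*} [Field K] [Ring R] [Algebra K R]
    (q : K) (u : Fin 4 → R) : Prop where
  qCommute₀₁ : QCommute (q⁻¹ ^ 2) (u 0) (u 1)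
  qCommute₁₂ : QCommute (q⁻¹ ^ 2) (u 1) (u 2)
  qCommute₂₃ : QCommute (q⁻¹ ^ 2) (u 2) (u 3)
  mul₀₂ : u 0 * u 2 = q⁻¹ ^ 2 • (u 2 * u 0) + (q⁻¹ ^ 2 - 1) • (u 1 * u 1)
  mul₁₃ : u 1 * u 3 = q⁻¹ ^ 2 • (u 3 * u 1) + (q⁻¹ ^ 2 - 1) • (u 2 * u 2)
  mul₀₃ : u 0 * u 3 = q⁻¹ ^ 2 • (u 3 * u 0) + (q⁻¹ ^ 4 - 1) • (u 2 * u 1)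

section Minors

variable {K R : Type*} [Field K] [Ring R] [Algebra K R] (q : K) (u : Fin 4 → R)

/-- `p₀ = u₂u₀ - q²u₁²`: the quantum minor in columns `0, 1` of the Hankel matrix with rows
`(u₀, u₁, u₂)` and `(u₁, u₂, u₃)`. -/
def minor₀₁ : R := u 2 * u 0 - q ^ 2 • (u 1 * u 1)

/-- `z = u₃u₀ - q²u₂u₁`: the quantum minor in columns `0, 2` of the Hankel matrix with rows
`(u₀, u₁, u₂)` and `(u₁, u₂, u₃)`. It turns out to be `B[1,0,0,1]`. -/
def minor₀₂ : R := u 3 * u 0 - q ^ 2 • (u 2 * u 1)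

/-- `p₁ = u₃u₁ - q²u₂²`: the quantum minor in columns `1, 2` of the Hankel matrix with rows
`(u₀, u₁, u₂)` and `(u₁, u₂, u₃)`. -/
def minor₁₂ : R := u 3 * u 1 - q ^ 2 • (u 2 * u 2)

/-- The family `u₃, u₂, u₁, u₀` in the opposite algebra, the target of the duality `uᵢ ↦ u₃₋ᵢ`
that exchanges `minor₀₁` with `minor₁₂` and fixes `minor₀₂`. -/
def oppositeRev {R : Type*} (u : Fin 4 → R) (i : Fin 4) : Rᵐᵒᵖ := MulOpposite.op (u i.rev)

theorem minor₁₂_oppositeRev : minor₁₂ q (oppositeRev u) = MulOpposite.op (minor₀₁ q u) := by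
  simp [minor₁₂, minor₀₁, oppositeRev, Fin.rev]

theorem minor₀₂_oppositeRev : minor₀₂ q (oppositeRev u) = MulOpposite.op (minor₀₂ q u) := by
  simp [minor₀₂, oppositeRev, Fin.rev]

end Minors

namespace StraighteningRelations

variable {K R : Type*} [Field K] [Ring R] [Algebra K R] {q : K} {u : Fin 4 → R}

theorem oppositeRev (h : StraighteningRelations q u) :
    StraighteningRelations q (oppositeRev u) where
  qCommute₀₁ := QCommute.op_iff.2 h.qCommute₂₃
  qCommute₁₂ := QCommute.op_iff.2 h.qCommute₁₂
  qCommute₂₃ := QCommute.op_iff.2 h.qCommute₀₁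
  mul₀₂ := MulOpposite.unop_injective h.mul₁₃
  mul₁₃ := MulOpposite.unop_injective h.mul₀₂
  mul₀₃ := MulOpposite.unop_injective h.mul₀₃

theorem normalOrder (h : StraighteningRelations q u) :
    (u 0 * u 1 = q⁻¹ ^ 2 • (u 1 * u 0)) ∧
    (u 1 * u 2 = q⁻¹ ^ 2 • (u 2 * u 1)) ∧
    (u 2 * u 3 = q⁻¹ ^ 2 • (u 3 * u 2)) ∧
    (u 0 * u 2 = q⁻¹ ^ 2 • (u 2 * u 0) + (q⁻¹ ^ 2 - 1) • (u 1 * u 1)) ∧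
    (u 1 * u 3 = q⁻¹ ^ 2 • (u 3 * u 1) + (q⁻¹ ^ 2 - 1) • (u 2 * u 2)) ∧
    (u 0 * u 3 = q⁻¹ ^ 2 • (u 3 * u 0) + (q⁻¹ ^ 4 - 1) • (u 2 * u 1)) ∧
    ∀ x : R,
      (u 0 * (u 1 * x) = q⁻¹ ^ 2 • (u 1 * (u 0 * x))) ∧
      (u 1 * (u 2 * x) = q⁻¹ ^ 2 • (u 2 * (u 1 * x))) ∧
      (u 2 * (u 3 * x) = q⁻¹ ^ 2 • (u 3 * (u 2 * x))) ∧
      (u 0 * (u 2 * x) =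
        q⁻¹ ^ 2 • (u 2 * (u 0 * x)) + (q⁻¹ ^ 2 - 1) • (u 1 * (u 1 * x))) ∧
      (u 1 * (u 3 * x) =
        q⁻¹ ^ 2 • (u 3 * (u 1 * x)) + (q⁻¹ ^ 2 - 1) • (u 2 * (u 2 * x))) ∧
      (u 0 * (u 3 * x) =
        q⁻¹ ^ 2 • (u 3 * (u 0 * x)) + (q⁻¹ ^ 4 - 1) • (u 2 * (u 1 * x))) := by
  refine ⟨h.qCommute₀₁, h.qCommute₁₂, h.qCommute₂₃, h.mul₀₂, h.mul₁₃, h.mul₀₃, fun x =>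
    ⟨h.qCommute₀₁.left_comm x, h.qCommute₁₂.left_comm x, h.qCommute₂₃.left_comm x, ?_, ?_, ?_⟩⟩
  · simp only [← mul_assoc, h.mul₀₂, add_mul, smul_mul_assoc]
  · simp only [← mul_assoc, h.mul₁₃, add_mul, smul_mul_assoc]
  · simp only [← mul_assoc, h.mul₀₃, add_mul, smul_mul_assoc]

theorem minor₁₂_qCommute₀ (h : StraighteningRelations q u) (hq : q ≠ 0) :
    QCommute (q ^ 4) (minor₁₂ q u) (u 0) := by
  simp only [QCommute, minor₁₂, mul_sub, sub_mul, mul_add, mul_smul_comm, smul_mul_assoc, mul_assoc,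
    h.normalOrder]
  match_scalars <;> field_simp
  ring

theorem minor₁₂_qCommute₁ (h : StraighteningRelations q u) (hq : q ≠ 0) :
    QCommute (q ^ 2) (minor₁₂ q u) (u 1) := by
  simp only [QCommute, minor₁₂, mul_sub, sub_mul, mul_smul_comm, smul_mul_assoc, mul_assoc,
    h.normalOrder]
  match_scalars <;> field_simp
  ring

theorem minor₁₂_qCommute₂ (h : StraighteningRelations q u) :
    QCommute (1 : K) (minor₁₂ q u) (u 2) := by
  simp only [QCommute, minor₁₂, mul_sub, sub_mul, mul_smul_comm, smul_mul_assoc, mul_assoc,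
    h.normalOrder, one_smul]

theorem qCommute₃_minor₁₂ (h : StraighteningRelations q u) (hq : q ≠ 0) :
    QCommute (q ^ 2) (u 3) (minor₁₂ q u) := by
  simp only [QCommute, minor₁₂, mul_sub, sub_mul, mul_add, mul_smul_comm, smul_mul_assoc, mul_assoc,
    h.normalOrder]
  match_scalars <;> field_simp
  ring

theorem qCommute₃_minor₀₁ (h : StraighteningRelations q u) (hq : q ≠ 0) :
    QCommute (q ^ 4) (u 3) (minor₀₁ q u) :=
  QCommute.op_iff.1 (minor₁₂_oppositeRev q u ▸ h.oppositeRev.minor₁₂_qCommute₀ hq)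

theorem qCommute₂_minor₀₁ (h : StraighteningRelations q u) (hq : q ≠ 0) :
    QCommute (q ^ 2) (u 2) (minor₀₁ q u) :=
  QCommute.op_iff.1 (minor₁₂_oppositeRev q u ▸ h.oppositeRev.minor₁₂_qCommute₁ hq)

theorem minor₁₂_qCommute_minor₀₂ (h : StraighteningRelations q u) (hq : q ≠ 0) :
    QCommute (q ^ 2) (minor₁₂ q u) (minor₀₂ q u) := by
  have hu₃ := (h.qCommute₃_minor₁₂ hq).symm (pow_ne_zero 2 hq)
  refine QCommute.sub_right ?_ (QCommute.smul_right ?_ _)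
  · exact (hu₃.mul_right (h.minor₁₂_qCommute₀ hq)).congr_coeff (by field_simp)
  · exact (h.minor₁₂_qCommute₂.mul_right (h.minor₁₂_qCommute₁ hq)).congr_coeff (one_mul _)

theorem minor₀₂_qCommute_minor₀₁ (h : StraighteningRelations q u) (hq : q ≠ 0) :
    QCommute (q ^ 2) (minor₀₂ q u) (minor₀₁ q u) := by
  have hop := h.oppositeRev.minor₁₂_qCommute_minor₀₂ hq
  rw [minor₁₂_oppositeRev, minor₀₂_oppositeRev] at hop
  exact QCommute.op_iff.1 hop

theorem minor₁₂_qCommute_minor₀₁ (h : StraighteningRelations q u) (hq : q ≠ 0) :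
    QCommute (q ^ 4) (minor₁₂ q u) (minor₀₁ q u) := by
  have hu₁ := h.minor₁₂_qCommute₁ hq
  refine QCommute.sub_right ?_ (QCommute.smul_right ?_ _)
  · exact (h.minor₁₂_qCommute₂.mul_right (h.minor₁₂_qCommute₀ hq)).congr_coeff (one_mul _)
  · exact (hu₁.mul_right hu₁).congr_coeff (by ring)

theorem minor₁₂_mul_minor₀₁_commute_minor₀₂ (h : StraighteningRelations q u) (hq : q ≠ 0) :
    Commute (minor₁₂ q u * minor₀₁ q u) (minor₀₂ q u) := by
  have hz := (h.minor₀₂_qCommute_minor₀₁ hq).symm (pow_ne_zero 2 hq)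
  have := (h.minor₁₂_qCommute_minor₀₂ hq).mul_left hz
  rwa [mul_inv_cancel₀ (pow_ne_zero 2 hq), QCommute, one_smul] at this

theorem qCommute₃_minor₁₂_mul_minor₀₁ (h : StraighteningRelations q u) (hq : q ≠ 0) :
    QCommute (q ^ 6) (u 3) (minor₁₂ q u * minor₀₁ q u) :=
  ((h.qCommute₃_minor₁₂ hq).mul_right (h.qCommute₃_minor₀₁ hq)).congr_coeff (by ring)

theorem minor₁₂_mul_u₂_qCommute_minor₁₂_mul_minor₀₁ (h : StraighteningRelations q u) (hq : q ≠ 0) :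
    QCommute (q ^ 6) (minor₁₂ q u * u 2) (minor₁₂ q u * minor₀₁ q u) := by
  have hself : QCommute (1 : K) (minor₁₂ q u) (minor₁₂ q u) := (one_smul K _).symm
  have hu₂ : QCommute (1 : K) (u 2) (minor₁₂ q u) := by
    simpa using h.minor₁₂_qCommute₂.symm one_ne_zero
  refine ((hself.mul_left hu₂).mul_right
    ((h.minor₁₂_qCommute_minor₀₁ hq).mul_left (h.qCommute₂_minor₀₁ hq))).congr_coeff (by ring)

theorem u₃_mul_minor₀₂ (h : StraighteningRelations q u) (hq : q ≠ 0) :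
    u 3 * minor₀₂ q u = q ^ 2 • (minor₀₂ q u * u 3) + (q ^ 2 - 1) • (minor₁₂ q u * u 2) := by
  simp only [minor₀₂, minor₁₂, mul_sub, sub_mul, mul_add, mul_smul_comm, smul_mul_assoc, mul_assoc,
    h.normalOrder]
  match_scalars <;> field_simp <;> ring

theorem minor₀₂_mul_u₂ (h : StraighteningRelations q u) (hq : q ≠ 0) :
    q ^ 2 • (minor₀₂ q u * u 2) =
      u 2 * minor₀₂ q u + ((q ^ 2 - 1) * q ^ 2) • (minor₀₁ q u * u 3) := by
  simp only [minor₀₂, minor₀₁, mul_sub, sub_mul, mul_add, mul_smul_comm, smul_mul_assoc, mul_assoc,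
    h.normalOrder]
  match_scalars <;> field_simp <;> ring

theorem minor₀₂_mul_u₂' (h : StraighteningRelations q u) (hq : q ≠ 0) :
    q ^ 2 • (minor₀₂ q u * u 2) = minor₁₂ q u * u 1 + q ^ 4 • (minor₀₁ q u * u 3) := by
  simp only [minor₀₂, minor₀₁, minor₁₂, sub_mul, mul_add, mul_smul_comm, smul_mul_assoc,
    mul_assoc, h.normalOrder]
  match_scalars <;> field_simp <;> ring

theorem minor₀₁_eq (h : StraighteningRelations q u) (hq : q ≠ 0) :
    minor₀₁ q u = q ^ 2 • (u 0 * u 2) - u 1 * u 1 := by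
  rw [minor₀₁, h.mul₀₂]
  match_scalars <;> field_simp
  ring

theorem minor₀₂_eq (h : StraighteningRelations q u) (hq : q ≠ 0) :
    minor₀₂ q u = q ^ 2 • (u 0 * u 3) - u 1 * u 2 := by
  rw [minor₀₂, h.mul₀₃, h.qCommute₁₂.eq]
  match_scalars <;> field_simp
  ring

theorem minor₁₂_eq (h : StraighteningRelations q u) (hq : q ≠ 0) :
    minor₁₂ q u = q ^ 2 • (u 1 * u 3) - u 2 * u 2 := by
  rw [minor₁₂, h.mul₁₃]
  match_scalars <;> field_simp
  ring

end StraighteningRelations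

/-! ### Uniqueness of unitriangular eigenvectors -/

section Bar

open Polynomial

variable {K : Type*} [Field K] {q c : K}

theorem ne_zero_of_transcendental (hq : Transcendental ℤ q) : q ≠ 0 :=
  fun h => hq (h ▸ isAlgebraic_zero)

theorem eq_zero_of_reverse_eq_X_pow_mul {R : Type*} [CommRing R] [IsDomain R] {p : R[X]}
    (h : p.reverse = X ^ (p.natDegree + 2) * p) : p = 0 := by
  by_contra hp
  have hdeg := p.reverse_natDegree_le
  rw [h, natDegree_mul (pow_ne_zero _ X_ne_zero) hp, natDegree_X_pow] at hdeg
  omega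

theorem eq_zero_of_bar_mul_eq (hq : Transcendental ℤ q) {bar : K →+* K} (hbar : bar q = q⁻¹)
    (hc : c ∈ Algebra.adjoin ℤ {q}) (h : bar (q * c) = q * c) : c = 0 := by
  obtain ⟨p, rfl⟩ := Algebra.adjoin_singleton_eq_range_aeval ℤ q ▸ hc
  have hq0 := ne_zero_of_transcendental hq
  have hbarp : bar (aeval q p) = aeval q⁻¹ p := by
    rw [← hbar]; exact (p.aeval_algHom_apply bar.toIntAlgHom q).symm
  have hrev : aeval q p.reverse = q ^ p.natDegree * aeval q⁻¹ p := by
    let _ : Invertible q⁻¹ := invertibleOfNonzero (inv_ne_zero hq0)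
    have := eval₂_reverse_mul_pow (algebraMap ℤ K) q⁻¹ p
    rw [invOf_eq_inv, inv_inv, inv_pow] at this
    rw [aeval_def, aeval_def, ← this, mul_comm, inv_mul_cancel_right₀ (pow_ne_zero _ hq0)]
  change bar (q * aeval q p) = q * aeval q p at h
  change aeval q p = 0
  have hp : p = 0 := by
    refine eq_zero_of_reverse_eq_X_pow_mul (transcendental_iff_injective.1 hq ?_)
    rw [map_mul, hbar, hbarp, inv_mul_eq_iff_eq_mul₀ hq0] at h
    rw [hrev, h, map_mul, map_pow, aeval_X]
    ring
  rw [hp, map_zero]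

end Bar

/-- The `ℤ[q]`-lattice `∑_{b ∈ s} qℤ[q]·E b`. -/
def qLattice {K M ι : Type*} [Field K] [AddCommGroup M] [Module K M] (q : K) (E : ι → M)
    (s : Set ι) : Submodule (Algebra.adjoin ℤ {q}) M :=
  Submodule.span _ ((fun b => q • E b) '' s)

namespace qLattice

variable {K M M' ι κ : Type*} [Field K] [AddCommGroup M] [Module K M] [AddCommGroup M']
  [Module K M'] {q : K} {E : ι → M} {E' : κ → M'} {s s' : Set ι} {x : M} {b : ι}

theorem mono (h : s ⊆ s') : qLattice q E s ≤ qLattice q E s' :=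
  Submodule.span_mono (Set.image_mono h)

theorem smul_mem {c : K} (hc : c ∈ Algebra.adjoin ℤ {q}) (hx : x ∈ qLattice q E s) :
    c • x ∈ qLattice q E s :=
  (qLattice q E s).smul_mem (⟨c, hc⟩ : Algebra.adjoin ℤ {q}) hx

theorem pow_smul_mem (k : ℕ) (hx : x ∈ qLattice q E s) : q ^ k • x ∈ qLattice q E s :=
  smul_mem (pow_mem (Algebra.self_mem_adjoin_singleton ℤ q) k) hx

theorem smul_apply_mem (hb : b ∈ s) : q • E b ∈ qLattice q E s :=
  Submodule.subset_span (Set.mem_image_of_mem _ hb)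

theorem pow_succ_smul_apply_mem (k : ℕ) (hb : b ∈ s) : q ^ (k + 1) • E b ∈ qLattice q E s := by
  rw [pow_succ, mul_smul]
  exact pow_smul_mem k (smul_apply_mem hb)

theorem map_mem {t : Set κ} (f : M →ₗ[K] M') (hf : ∀ b ∈ s, q • f (E b) ∈ qLattice q E' t)
    (hx : x ∈ qLattice q E s) : f x ∈ qLattice q E' t := by
  suffices qLattice q E s ≤ (qLattice q E' t).comap (f.restrictScalars (Algebra.adjoin ℤ {q})) from
    this hx
  refine Submodule.span_le.2 ?_
  rintro _ ⟨b, hb, rfl⟩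
  simpa using hf b hb

theorem mem_span_image (hx : x ∈ qLattice q E s) : x ∈ Submodule.span K (E '' s) := by
  suffices qLattice q E s ≤ (Submodule.span K (E '' s)).restrictScalars (Algebra.adjoin ℤ {q}) from
    this hx
  refine Submodule.span_le.2 ?_
  rintro _ ⟨b, hb, rfl⟩
  exact Submodule.smul_mem _ q (Submodule.subset_span (Set.mem_image_of_mem E hb))

theorem eq_zero_of_semilinear (hq : Transcendental ℤ q) {bar : K →+* K} (hbar : bar q = q⁻¹)
    (σ : M →ₛₗ[bar] M) (hE : LinearIndependent K E) {χ : K} (hχ : χ ≠ 0)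
    (hσ : ∀ b ∈ s, σ (E b) = χ • E b) (hx : x ∈ qLattice q E s) (hσx : σ x = χ • x) : x = 0 := by
  obtain ⟨c, hc, rfl⟩ := (Finsupp.mem_span_image_iff_linearCombination _).1 hx
  rw [Finsupp.linearCombination_apply, Finsupp.sum] at hσx ⊢
  have hsum : ∑ b ∈ c.support, (χ * (bar (q * c b) - q * c b)) • E b = 0 := by
    rw [← sub_eq_zero.2 hσx, map_sum, Finset.smul_sum, ← Finset.sum_sub_distrib]
    refine Finset.sum_congr rfl fun b hb => ?_
    rw [Subalgebra.smul_def, smul_smul, map_smulₛₗ, hσ b (hc hb), mul_comm (c b : K)]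
    module
  refine Finset.sum_eq_zero fun b hb => ?_
  have hfix := (mul_eq_zero.1 (linearIndependent_iff'.1 hE _ _ hsum b hb)).resolve_left hχ
  have hcb := eq_zero_of_bar_mul_eq hq hbar (c b).2 (sub_eq_zero.1 hfix)
  rw [Subalgebra.smul_def, hcb, zero_smul]

end qLattice

section Unitriangular

variable {K M ι : Type*} [Field K] [AddCommGroup M] [Module K M] {q : K} {E B : ι → M}
  {S : ι → Set ι} {height : ι → ℕ}

theorem qLattice_le_of_unitriangular (hS : ∀ a, ∀ b ∈ S a, S b ⊆ S a)
    (hheight : ∀ a, ∀ b ∈ S a, height b < height a)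
    (hB : ∀ a, B a - E a ∈ qLattice q E (S a)) (a : ι) :
    qLattice q E (S a) ≤ qLattice q B (S a) := by
  induction hn : height a using Nat.strong_induction_on generalizing a with
  | _ n ih =>
    refine Submodule.span_le.2 ?_
    rintro _ ⟨b, hb, rfl⟩
    have hsub : B b - E b ∈ qLattice q B (S a) :=
      qLattice.mono (hS a b hb) (ih _ (hn ▸ hheight a b hb) b rfl (hB b))
    have hqsub := qLattice.pow_smul_mem 1 hsub
    simpa [smul_sub] using sub_mem (qLattice.smul_apply_mem hb) hqsub

-- An index of maximal height in a linear relation among the `B b` occurs in no `S b`.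
theorem linearIndependent_of_unitriangular (hheight : ∀ a, ∀ b ∈ S a, height b < height a)
    (hE : LinearIndependent K E) (hB : ∀ a, B a - E a ∈ qLattice q E (S a)) :
    LinearIndependent K B := by
  classical
  refine linearIndependent_iff.2 fun c hc => ?_
  by_contra hne
  obtain ⟨b, hb, hmax⟩ := c.support.exists_max_image height (Finsupp.support_nonempty_iff.2 hne)
  have hmem : ∀ a, height a ≤ height b → B a - E a ∈ Submodule.span K (E '' {b}ᶜ) := by
    refine fun a ha => Submodule.span_mono (Set.image_mono ?_) (qLattice.mem_span_image (hB a))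
    rintro _ hba rfl
    exact (hheight a _ hba).not_ge ha
  have hEb : c b • E b ∈ Submodule.span K (E '' {b}ᶜ) := by
    have hsum : c b • E b =
        -(∑ a ∈ c.support.erase b, c a • (B a - E a + E a)) - c b • (B b - E b) := by
      rw [Finsupp.linearCombination_apply, Finsupp.sum, ← Finset.add_sum_erase _ _ hb] at hc
      simp only [sub_add_cancel, smul_sub, eq_neg_of_add_eq_zero_right hc]
      abel
    rw [hsum]
    refine sub_mem (neg_mem (sum_mem fun a ha => Submodule.smul_mem _ _ (add_mem ?_ ?_)))
      (Submodule.smul_mem _ _ (hmem b le_rfl))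
    · exact hmem a (hmax a (Finset.mem_of_mem_erase ha))
    · exact Submodule.subset_span (Set.mem_image_of_mem E (Finset.ne_of_mem_erase ha))
  rw [Submodule.smul_mem_iff _ (Finsupp.mem_support_iff.1 hb)] at hEb
  exact hE.notMem_span_image (s := {b}ᶜ) (x := b) (by simp) hEb

theorem eq_of_unitriangular_of_semilinear (hq : Transcendental ℤ q) {bar : K →+* K}
    (hbar : bar q = q⁻¹) (σ : M →ₛₗ[bar] M) (hS : ∀ a, ∀ b ∈ S a, S b ⊆ S a)
    (hheight : ∀ a, ∀ b ∈ S a, height b < height a) (hE : LinearIndependent K E)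
    (hB : ∀ a, B a - E a ∈ qLattice q E (S a)) {χ : ι → K} (hχ : ∀ a, χ a ≠ 0)
    (hχS : ∀ a, ∀ b ∈ S a, χ b = χ a) (hσB : ∀ a, σ (B a) = χ a • B a) {a : ι} {x : M}
    (hx : x - E a ∈ qLattice q E (S a)) (hσx : σ x = χ a • x) : x = B a := by
  refine sub_eq_zero.1 (qLattice.eq_zero_of_semilinear (s := S a) hq hbar σ
    (linearIndependent_of_unitriangular hheight hE hB) (hχ a) ?_ ?_ ?_)
  · exact fun b hb => hχS a b hb ▸ hσB b
  · apply qLattice_le_of_unitriangular hS hheight hB a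
    simpa using sub_mem hx (hB a)
  · rw [map_sub, hσx, hσB, smul_sub]

end Unitriangular

/-! ### Unitriangularity over the dual PBW basis -/

section Order

variable {a b : Idx}

theorem tri_iff : tri a b ↔ ∃ s r : ℕ, b.1 + s = a.1 ∧ b.2.1 + r = a.2.1 + 2 * s ∧
    b.2.2.1 + s = a.2.2.1 + 2 * r ∧ b.2.2.2 + r = a.2.2.2 := by
  constructor <;> rintro ⟨s, r, h₃, h₂, h₁, h₀⟩ <;>
    exact ⟨s, r, by omega, by omega, by omega, by omega⟩

theorem mem_Sset_iff : b ∈ Sset a ↔ ∃ s r : ℕ, 0 < s + r ∧ b.1 + s = a.1 ∧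
    b.2.1 + r = a.2.1 + 2 * s ∧ b.2.2.1 + s = a.2.2.1 + 2 * r ∧ b.2.2.2 + r = a.2.2.2 := by
  rw [Sset, Set.mem_ofPred_eq, tri_iff]
  constructor
  · rintro ⟨⟨s, r, h₃, h₂, h₁, h₀⟩, hne⟩
    refine ⟨s, r, Nat.pos_of_ne_zero fun hsr => hne ?_, h₃, h₂, h₁, h₀⟩
    ext <;> omega
  · rintro ⟨s, r, hpos, h₃, h₂, h₁, h₀⟩
    refine ⟨⟨s, r, h₃, h₂, h₁, h₀⟩, ?_⟩
    rintro rfl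
    omega

theorem Sset_subset (h : b ∈ Sset a) : Sset b ⊆ Sset a := by
  intro c hc
  rw [mem_Sset_iff] at *
  obtain ⟨s, r, hpos, h₃, h₂, h₁, h₀⟩ := h
  obtain ⟨s', r', hpos', h₃', h₂', h₁', h₀'⟩ := hc
  exact ⟨s + s', r + r', by omega, by omega, by omega, by omega, by omega⟩

theorem add_lt_add_of_mem_Sset (h : b ∈ Sset a) : b.1 + b.2.2.2 < a.1 + a.2.2.2 := by
  obtain ⟨s, r, hpos, h₃, -, -, h₀⟩ := mem_Sset_iff.1 h
  omega

theorem Nnum_eq_of_mem_Sset (h : b ∈ Sset a) : Nnum b = Nnum a := by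
  obtain ⟨⟨s, r, h₃, h₂, h₁, h₀⟩, -⟩ := h
  rw [Nnum, Nnum, h₃, h₂, h₁, h₀]
  ring

theorem add_mem_Sset_add (h : b ∈ Sset a) (δ : Idx) : b + δ ∈ Sset (a + δ) := by
  simp only [mem_Sset_iff, Prod.fst_add, Prod.snd_add] at *
  obtain ⟨s, r, hpos, h₃, h₂, h₁, h₀⟩ := h
  exact ⟨s, r, hpos, by omega, by omega, by omega, by omega⟩

end Order

/-- `x` is unitriangular at `a` with respect to the dual PBW basis `E`: it lies in
`E[a] + ∑_{b ∈ S(a)} qℤ[q]·E[b]`. -/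
def IsUnitriangular {K M : Type*} [Field K] [AddCommGroup M] [Module K M] (q : K) (E : Idx → M)
    (a : Idx) (x : M) : Prop :=
  x - E a ∈ qLattice q E (Sset a)

namespace IsUnitriangular

variable {K M : Type*} [Field K] [AddCommGroup M] [Module K M] {q : K} {E : Idx → M} {a b : Idx}
  {x y : M}

theorem self (a : Idx) : IsUnitriangular q E a (E a) := by
  rw [IsUnitriangular, sub_self]
  exact zero_mem _

theorem sub (hx : IsUnitriangular q E a x) (hy : y ∈ qLattice q E (Sset a)) :
    IsUnitriangular q E a (x - y) := by
  rw [IsUnitriangular, sub_right_comm]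
  exact sub_mem hx hy

theorem pow_succ_smul_mem (hx : IsUnitriangular q E b x) (k : ℕ) (hb : b ∈ Sset a) :
    q ^ (k + 1) • x ∈ qLattice q E (Sset a) := by
  rw [← sub_add_cancel x (E b), smul_add]
  exact add_mem (qLattice.pow_smul_mem _ (qLattice.mono (Sset_subset hb) hx))
    (qLattice.pow_succ_smul_apply_mem k hb)

theorem map (hx : IsUnitriangular q E a x) (f : M →ₗ[K] M) (δ : Idx)
    (ha : IsUnitriangular q E (a + δ) (f (E a)))
    (hf : ∀ b ∈ Sset a, ∃ k y, IsUnitriangular q E (b + δ) y ∧ f (E b) = q ^ k • y) :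
    IsUnitriangular q E (a + δ) (f x) := by
  have hmem : f (x - E a) ∈ qLattice q E (Sset (a + δ)) := by
    refine qLattice.map_mem f (fun b hb => ?_) hx
    obtain ⟨k, y, hy, hfb⟩ := hf b hb
    rw [hfb, smul_smul, ← pow_succ']
    exact hy.pow_succ_smul_mem k (add_mem_Sset_add hb δ)
  simpa [map_sub] using ha.sub (neg_mem hmem)

end IsUnitriangular

theorem isUnitriangular_of_sub_eq_sum {K M : Type*} [Field K] [AddCommGroup M] [Module K M] {q : K}
    {E : Idx → M} {a : Idx} {x : M} {φ : Idx →₀ Polynomial ℤ} (hφ : (φ.support : Set Idx) ⊆ Sset a)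
    (hx : x - E a = φ.sum fun b p => (q * p.eval₂ (Int.castRingHom K) q) • E b) :
    IsUnitriangular q E a x := by
  rw [IsUnitriangular, hx]
  refine sum_mem fun b hb => ?_
  dsimp only
  rw [mul_comm, mul_smul]
  exact qLattice.smul_mem (Polynomial.aeval_mem_adjoin_singleton ℤ q)
    (qLattice.smul_apply_mem (hφ hb))

/-- The rescaled PBW monomial `q^{b(a)} u₃^{a₃}u₂^{a₂}u₁^{a₁}u₀^{a₀}`. -/
def dualPBW {K R : Type*} [Field K] [Ring R] [Algebra K R] (q : K) (u : Fin 4 → R) (a : Idx) : R :=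
  q ^ bexp a • (u 3 ^ a.1 * u 2 ^ a.2.1 * u 1 ^ a.2.2.1 * u 0 ^ a.2.2.2)

section DualPBW

variable {K R : Type*} [Field K] [Ring R] [Algebra K R] {q : K} {u : Fin 4 → R}

theorem choose_succ_two (k : ℕ) : (k + 1).choose 2 = k.choose 2 + k := by
  rw [Nat.choose_succ_succ' k 1, Nat.choose_one_right, Nat.add_comm]

variable (q u) in
theorem u₃_mul_dualPBW (a : Idx) :
    q ^ a.1 • (u 3 * dualPBW q u a) = dualPBW q u (a + (1, 0, 0, 0)) := by
  simp only [dualPBW, bexp, Prod.fst_add, Prod.snd_add, add_zero, choose_succ_two, mul_smul_comm,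
    smul_smul, pow_succ' (u 3), mul_assoc]
  module

variable (q u) in
theorem dualPBW_mul_u₀ (a : Idx) :
    q ^ a.2.2.2 • (dualPBW q u a * u 0) = dualPBW q u (a + (0, 0, 0, 1)) := by
  simp only [dualPBW, bexp, Prod.fst_add, Prod.snd_add, add_zero, choose_succ_two, smul_mul_assoc,
    smul_smul, pow_succ (u 0), mul_assoc]
  module

namespace StraighteningRelations

theorem u₂_mul_dualPBW (h : StraighteningRelations q u) (hq : q ≠ 0) (a : Idx) :
    q ^ (2 * a.1 + a.2.1) • (u 2 * dualPBW q u a) = dualPBW q u (a + (0, 1, 0, 0)) := by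
  simp only [dualPBW, bexp, Prod.fst_add, Prod.snd_add, add_zero, choose_succ_two, mul_smul_comm,
    (h.qCommute₂₃.pow_right a.1).left_comm, smul_smul, pow_succ' (u 2), mul_assoc, inv_pow]
  match_scalars
  field_simp
  ring

theorem dualPBW_mul_u₁ (h : StraighteningRelations q u) (hq : q ≠ 0) (a : Idx) :
    q ^ (2 * a.2.2.2 + a.2.2.1) • (dualPBW q u a * u 1) = dualPBW q u (a + (0, 0, 1, 0)) := by
  simp only [dualPBW, bexp, Prod.fst_add, Prod.snd_add, add_zero, choose_succ_two, smul_mul_assoc,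
    (h.qCommute₀₁.pow_left a.2.2.2).eq, mul_smul_comm, smul_smul, pow_succ (u 1), mul_assoc,
    inv_pow]
  match_scalars
  field_simp
  ring

theorem minor₁₂_mul_dualPBW (h : StraighteningRelations q u) (hq : q ≠ 0) (a : Idx) :
    q ^ (3 * a.1 + 2 * a.2.1 + a.2.2.1) • (minor₁₂ q u * dualPBW q u a) =
      dualPBW q u (a + (1, 0, 1, 0)) -
        q ^ (a.1 + a.2.2.1 + 1) • dualPBW q u (a + (0, 2, 0, 0)) := by
  have hu₃ := ((h.qCommute₃_minor₁₂ hq).symm (pow_ne_zero 2 hq)).pow_right a.1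
  simp only [dualPBW, bexp, Prod.fst_add, Prod.snd_add, add_zero, choose_succ_two, mul_smul_comm,
    mul_assoc, hu₃.left_comm]
  simp only [minor₁₂, sub_mul, mul_sub, smul_mul_assoc, mul_smul_comm, mul_assoc, pow_succ (u 3),
    pow_succ' (u 2), pow_succ' (u 1), (h.qCommute₁₂.pow_right a.2.1).left_comm, inv_pow]
  match_scalars <;> field_simp <;> ring

theorem minor₀₁_mul_dualPBW (h : StraighteningRelations q u) (hq : q ≠ 0) (a : Idx) :
    q ^ (4 * a.1 + 3 * a.2.1 + 2 * a.2.2.1 + a.2.2.2) • (minor₀₁ q u * dualPBW q u a) =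
      dualPBW q u (a + (0, 1, 0, 1)) -
        q ^ (a.2.1 + a.2.2.2 + 1) • dualPBW q u (a + (0, 0, 2, 0)) := by
  have hu₃ := ((h.qCommute₃_minor₀₁ hq).symm (pow_ne_zero 4 hq)).pow_right a.1
  have hu₂ := ((h.qCommute₂_minor₀₁ hq).symm (pow_ne_zero 2 hq)).pow_right a.2.1
  simp only [dualPBW, bexp, Prod.fst_add, Prod.snd_add, add_zero, choose_succ_two, mul_smul_comm,
    mul_assoc, hu₃.left_comm, hu₂.left_comm]
  simp only [minor₀₁, sub_mul, mul_sub, smul_mul_assoc, mul_smul_comm, mul_assoc, pow_succ (u 2),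
    pow_succ' (u 1), pow_succ' (u 0), (h.qCommute₀₁.pow_right a.2.2.1).left_comm, inv_pow]
  match_scalars <;> field_simp <;> ring

end StraighteningRelations

end DualPBW

namespace IsUnitriangular

variable {K R : Type*} [Field K] [Ring R] [Algebra K R] {q : K} {u : Fin 4 → R} {a : Idx} {x : R}

theorem u₃_mul (hx : IsUnitriangular q (dualPBW q u) a x) :
    IsUnitriangular q (dualPBW q u) (a + (1, 0, 0, 0)) (q ^ a.1 • (u 3 * x)) := by
  refine hx.map (q ^ a.1 • LinearMap.mulLeft K (u 3)) _ ?_ fun b hb => ?_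
  · simpa [u₃_mul_dualPBW] using self (a + (1, 0, 0, 0))
  · obtain ⟨s, -, -, h₃, -⟩ := mem_Sset_iff.1 hb
    refine ⟨s, _, self _, ?_⟩
    simp [← u₃_mul_dualPBW, ← h₃, pow_add, mul_smul, smul_comm (q ^ s)]

theorem mul_u₀ (hx : IsUnitriangular q (dualPBW q u) a x) :
    IsUnitriangular q (dualPBW q u) (a + (0, 0, 0, 1)) (q ^ a.2.2.2 • (x * u 0)) := by
  refine hx.map (q ^ a.2.2.2 • LinearMap.mulRight K (u 0)) _ ?_ fun b hb => ?_
  · simpa [dualPBW_mul_u₀] using self (a + (0, 0, 0, 1))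
  · obtain ⟨-, r, -, -, -, -, h₀⟩ := mem_Sset_iff.1 hb
    refine ⟨r, _, self _, ?_⟩
    simp [← dualPBW_mul_u₀, ← h₀, pow_add, mul_smul, smul_comm (q ^ r)]

theorem u₂_mul (hu : StraighteningRelations q u) (hq : q ≠ 0)
    (hx : IsUnitriangular q (dualPBW q u) a x) :
    IsUnitriangular q (dualPBW q u) (a + (0, 1, 0, 0)) (q ^ (2 * a.1 + a.2.1) • (u 2 * x)) := by
  refine hx.map (q ^ (2 * a.1 + a.2.1) • LinearMap.mulLeft K (u 2)) _ ?_ fun b hb => ?_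
  · simpa [hu.u₂_mul_dualPBW hq] using self (a + (0, 1, 0, 0))
  · obtain ⟨s, r, -, h₃, h₂, -⟩ := mem_Sset_iff.1 hb
    refine ⟨r, _, self _, ?_⟩
    have hexp : 2 * a.1 + a.2.1 = r + (2 * b.1 + b.2.1) := by omega
    simp [← hu.u₂_mul_dualPBW hq, hexp, pow_add, mul_smul]

theorem mul_u₁ (hu : StraighteningRelations q u) (hq : q ≠ 0)
    (hx : IsUnitriangular q (dualPBW q u) a x) :
    IsUnitriangular q (dualPBW q u) (a + (0, 0, 1, 0))
      (q ^ (2 * a.2.2.2 + a.2.2.1) • (x * u 1)) := by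
  refine hx.map (q ^ (2 * a.2.2.2 + a.2.2.1) • LinearMap.mulRight K (u 1)) _ ?_ fun b hb => ?_
  · simpa [hu.dualPBW_mul_u₁ hq] using self (a + (0, 0, 1, 0))
  · obtain ⟨s, r, -, -, -, h₁, h₀⟩ := mem_Sset_iff.1 hb
    refine ⟨s, _, self _, ?_⟩
    have hexp : 2 * a.2.2.2 + a.2.2.1 = s + (2 * b.2.2.2 + b.2.2.1) := by omega
    simp [← hu.dualPBW_mul_u₁ hq, hexp, pow_add, mul_smul]

theorem minor₁₂_mul (hu : StraighteningRelations q u) (hq : q ≠ 0)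
    (hx : IsUnitriangular q (dualPBW q u) a x) :
    IsUnitriangular q (dualPBW q u) (a + (1, 0, 1, 0))
      (q ^ (3 * a.1 + 2 * a.2.1 + a.2.2.1) • (minor₁₂ q u * x)) := by
  have hself (b : Idx) : IsUnitriangular q (dualPBW q u) (b + (1, 0, 1, 0))
      (q ^ (3 * b.1 + 2 * b.2.1 + b.2.2.1) • (minor₁₂ q u * dualPBW q u b)) := by
    rw [hu.minor₁₂_mul_dualPBW hq]
    refine (self _).sub (qLattice.pow_succ_smul_apply_mem _ (mem_Sset_iff.2 ⟨1, 0, by simp⟩))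
  refine hx.map (q ^ (3 * a.1 + 2 * a.2.1 + a.2.2.1) • LinearMap.mulLeft K (minor₁₂ q u)) _
    (hself a) fun b hb => ⟨0, _, hself b, ?_⟩
  obtain ⟨s, r, -, h₃, h₂, h₁, -⟩ := mem_Sset_iff.1 hb
  have hexp : 3 * a.1 + 2 * a.2.1 + a.2.2.1 = 3 * b.1 + 2 * b.2.1 + b.2.2.1 := by omega
  simp [hexp]

theorem minor₀₁_mul (hu : StraighteningRelations q u) (hq : q ≠ 0)
    (hx : IsUnitriangular q (dualPBW q u) a x) :
    IsUnitriangular q (dualPBW q u) (a + (0, 1, 0, 1))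
      (q ^ (4 * a.1 + 3 * a.2.1 + 2 * a.2.2.1 + a.2.2.2) • (minor₀₁ q u * x)) := by
  have hself (b : Idx) : IsUnitriangular q (dualPBW q u) (b + (0, 1, 0, 1))
      (q ^ (4 * b.1 + 3 * b.2.1 + 2 * b.2.2.1 + b.2.2.2) • (minor₀₁ q u * dualPBW q u b)) := by
    rw [hu.minor₀₁_mul_dualPBW hq]
    refine (self _).sub (qLattice.pow_succ_smul_apply_mem _ (mem_Sset_iff.2 ⟨0, 1, by simp⟩))
  refine hx.map (q ^ (4 * a.1 + 3 * a.2.1 + 2 * a.2.2.1 + a.2.2.2) •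
    LinearMap.mulLeft K (minor₀₁ q u)) _ (hself a) fun b hb => ⟨0, _, hself b, ?_⟩
  obtain ⟨s, r, -, h₃, h₂, h₁, h₀⟩ := mem_Sset_iff.1 hb
  have hexp : 4 * a.1 + 3 * a.2.1 + 2 * a.2.2.1 + a.2.2.2 =
      4 * b.1 + 3 * b.2.1 + 2 * b.2.2.1 + b.2.2.2 := by omega
  simp [hexp]

end IsUnitriangular

/-! ### Closed forms of dual canonical basis elements -/

section DualCanonical

variable {K R : Type*} [Field K] [Ring R] [Algebra K R] (q : K) (u : Fin 4 → R)

/-- The closed form of `B[m,0,0,m]`, by the Chebyshev-type recursion of the commuting elements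
`z` and `p₁p₀`. -/
def dcb₀₀₀₀ : ℕ → R
  | 0 => 1
  | 1 => minor₀₂ q u
  | m + 2 => q ^ (4 * m + 4) • (dcb₀₀₀₀ (m + 1) * minor₀₂ q u) -
      q ^ (8 * m + 2) • (minor₁₂ q u * minor₀₁ q u * dcb₀₀₀₀ m)

/-- The closed form of `B[m+1,0,0,m]`. -/
def dcb₁₀₀₀ : ℕ → R
  | 0 => u 3
  | 1 => q • (u 3 * minor₀₂ q u) - q ^ 3 • (minor₁₂ q u * u 2)
  | m + 2 => q ^ (4 * m + 5) • (dcb₁₀₀₀ (m + 1) * minor₀₂ q u) -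
      q ^ (8 * m + 10) • (minor₁₂ q u * minor₀₁ q u * dcb₁₀₀₀ m)

/-- The closed form of `B[m,1,0,m]`. -/
def dcb₀₁₀₀ : ℕ → R
  | 0 => u 2
  | m + 1 => q ^ (5 * m + 4) • (minor₀₁ q u * dcb₁₀₀₀ q u m)

/-- The closed form of `B[m+1,1,1,m]`. -/
def dcb₁₁₁₀ (m : ℕ) : R := q ^ (3 * m + 2) • (minor₁₂ q u * dcb₀₁₀₀ q u m)

theorem dcb₁₁₁₀_succ (m : ℕ) :
    dcb₁₁₁₀ q u (m + 1) = q ^ (8 * m + 9) • (minor₁₂ q u * minor₀₁ q u * dcb₁₀₀₀ q u m) := by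
  rw [dcb₁₁₁₀, dcb₀₁₀₀, mul_smul_comm, mul_assoc]
  module

theorem dcb₁₀₀₀_succ : ∀ m, dcb₁₀₀₀ q u (m + 1) =
    q ^ (4 * m + 1) • (dcb₁₀₀₀ q u m * minor₀₂ q u) - q • dcb₁₁₁₀ q u m
  | 0 => by
    simp only [dcb₁₀₀₀, dcb₁₁₁₀, dcb₀₁₀₀]
    module
  | m + 1 => by
    rw [dcb₁₀₀₀, dcb₁₁₁₀_succ]
    module

variable {q} in
theorem dcb₁₀₀₀_mul_minor₀₂_eq_add (hq : q ≠ 0) (m : ℕ) :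
    dcb₁₀₀₀ q u m * minor₀₂ q u =
      q⁻¹ ^ (4 * m + 1) • dcb₁₀₀₀ q u (m + 1) + q⁻¹ ^ (4 * m) • dcb₁₁₁₀ q u m := by
  simp only [dcb₁₀₀₀_succ, inv_pow]
  match_scalars <;> field_simp
  ring

end DualCanonical

namespace StraighteningRelations

variable {K R : Type*} [Field K] [Ring R] [Algebra K R] {q : K} {u : Fin 4 → R}

theorem minor₁₂_mul_u₂_mul_minor₀₂ (h : StraighteningRelations q u) (hq : q ≠ 0) :
    minor₁₂ q u * u 2 * minor₀₂ q u = q ^ 4 • (minor₀₂ q u * (minor₁₂ q u * u 2)) -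
      ((q ^ 2 - 1) * q ^ 2) • (minor₁₂ q u * minor₀₁ q u * u 3) := by
  have hu₂ := congrArg (minor₁₂ q u * ·) (h.minor₀₂_mul_u₂ hq)
  simp only [mul_add, mul_smul_comm, (h.minor₁₂_qCommute_minor₀₂ hq).left_comm, smul_smul] at hu₂
  simp only [mul_assoc]
  linear_combination (norm := module) -hu₂

theorem dcb₁₀₀₀_mul_minor₀₂ (h : StraighteningRelations q u) (hq : q ≠ 0) :
    ∀ m, q ^ (4 * m + 2) • (dcb₁₀₀₀ q u m * minor₀₂ q u) =
      q ^ (4 * m + 4) • (minor₀₂ q u * dcb₁₀₀₀ q u m) + (q ^ 2 - 1) • dcb₁₁₁₀ q u m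
  | 0 => by
    simp only [dcb₁₀₀₀, dcb₁₁₁₀, dcb₀₁₀₀, h.u₃_mul_minor₀₂ hq]
    module
  | 1 => by
    have hu₃ := congrArg (· * minor₀₂ q u) (h.u₃_mul_minor₀₂ hq)
    have hw := h.minor₁₂_mul_u₂_mul_minor₀₂ hq
    simp only [add_mul, smul_mul_assoc, mul_assoc] at hu₃ hw
    simp only [dcb₁₀₀₀, dcb₁₁₁₀_succ, sub_mul, mul_sub, smul_mul_assoc, mul_smul_comm, mul_assoc]
    linear_combination (norm := module) q ^ 7 • hu₃ - q ^ 7 • hw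
  | m + 2 => by
    have hz := (h.minor₁₂_mul_minor₀₁_commute_minor₀₂ hq).eq
    have ih₁ := congrArg (· * minor₀₂ q u) (h.dcb₁₀₀₀_mul_minor₀₂ hq (m + 1))
    have ih₀ := congrArg (minor₁₂ q u * minor₀₁ q u * ·) (h.dcb₁₀₀₀_mul_minor₀₂ hq m)
    have hX := congrArg (minor₁₂ q u * minor₀₁ q u * ·) (dcb₁₀₀₀_succ q u m)
    have hz' := congrArg (· * dcb₁₀₀₀ q u m) hz
    simp only [dcb₁₁₁₀_succ, add_mul, mul_add, mul_sub, smul_mul_assoc, mul_smul_comm,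
      mul_assoc] at ih₁ ih₀ hX hz'
    simp only [dcb₁₀₀₀, dcb₁₁₁₀_succ, sub_mul, mul_sub, smul_mul_assoc, mul_smul_comm, mul_assoc]
    linear_combination (norm := module) q ^ (4 * m + 9) • ih₁ - q ^ (8 * m + 18) • ih₀ -
      ((q ^ 2 - 1) * q ^ (8 * m + 17)) • hX - q ^ (12 * m + 22) • hz'

theorem q_smul_dcb₁₀₀₀_succ (h : StraighteningRelations q u) (hq : q ≠ 0) (m : ℕ) :
    q • dcb₁₀₀₀ q u (m + 1) =
      q ^ (4 * m + 4) • (minor₀₂ q u * dcb₁₀₀₀ q u m) - dcb₁₁₁₀ q u m := by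
  rw [dcb₁₀₀₀_succ]
  linear_combination (norm := module) h.dcb₁₀₀₀_mul_minor₀₂ hq m

theorem minor₀₂_mul_dcb₁₀₀₀_eq_add (h : StraighteningRelations q u) (hq : q ≠ 0) (m : ℕ) :
    minor₀₂ q u * dcb₁₀₀₀ q u m =
      q⁻¹ ^ (4 * m + 3) • dcb₁₀₀₀ q u (m + 1) + q⁻¹ ^ (4 * m + 4) • dcb₁₁₁₀ q u m := by
  have hX := eq_inv_smul_iff₀ hq |>.2 (h.q_smul_dcb₁₀₀₀_succ hq m)
  simp only [hX, inv_pow]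
  match_scalars <;> field_simp <;> ring

theorem dcb₁₀₀₀_one (h : StraighteningRelations q u) (hq : q ≠ 0) :
    dcb₁₀₀₀ q u 1 = q ^ 3 • (minor₀₂ q u * u 3) - q • (minor₁₂ q u * u 2) := by
  rw [dcb₁₀₀₀, h.u₃_mul_minor₀₂ hq]
  module

theorem dcb₁₀₀₀_add_two (h : StraighteningRelations q u) (hq : q ≠ 0) (m : ℕ) :
    dcb₁₀₀₀ q u (m + 2) = q ^ (4 * m + 7) • (minor₀₂ q u * dcb₁₀₀₀ q u (m + 1)) -
      q ^ (8 * m + 8) • (minor₁₂ q u * minor₀₁ q u * dcb₁₀₀₀ q u m) := by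
  refine smul_right_injective R hq ?_
  dsimp only
  rw [h.q_smul_dcb₁₀₀₀_succ hq, dcb₁₁₁₀_succ]
  module

theorem dcb₀₁₀₀_add_two (h : StraighteningRelations q u) (hq : q ≠ 0) :
    ∀ m, dcb₀₁₀₀ q u (m + 2) = q ^ (4 * m + 6) • (minor₀₂ q u * dcb₀₁₀₀ q u (m + 1)) -
      q ^ (8 * m + 6) • (minor₁₂ q u * minor₀₁ q u * dcb₀₁₀₀ q u m) := by
  have hz (x : R) : q ^ 2 • (minor₀₁ q u * (minor₀₂ q u * x)) =
      minor₀₂ q u * (minor₀₁ q u * x) := ((h.minor₀₂_qCommute_minor₀₁ hq).left_comm x).symm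
  have hp (x : R) : q ^ 4 • (minor₀₁ q u * (minor₁₂ q u * x)) =
      minor₁₂ q u * (minor₀₁ q u * x) := ((h.minor₁₂_qCommute_minor₀₁ hq).left_comm x).symm
  intro m
  cases m with
  | zero =>
    simp only [dcb₀₁₀₀, h.dcb₁₀₀₀_one hq, mul_sub, mul_smul_comm, mul_assoc, ← hz, ← hp]
    simp only [dcb₁₀₀₀]
    module
  | succ m =>
    simp only [dcb₀₁₀₀, h.dcb₁₀₀₀_add_two hq, mul_sub, mul_smul_comm, mul_assoc, ← hz, ← hp]
    module

theorem minor₀₂_commute_dcb₀₀₀₀ (h : StraighteningRelations q u) (hq : q ≠ 0) :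
    ∀ m, Commute (minor₀₂ q u) (dcb₀₀₀₀ q u m)
  | 0 => Commute.one_right _
  | 1 => Commute.refl _
  | m + 2 => by
    have hP := (h.minor₁₂_mul_minor₀₁_commute_minor₀₂ hq).symm
    have ih₁ := (h.minor₀₂_commute_dcb₀₀₀₀ hq (m + 1)).mul_right (Commute.refl _)
    have ih₀ := hP.mul_right (h.minor₀₂_commute_dcb₀₀₀₀ hq m)
    exact (ih₁.smul_right _).sub_right (ih₀.smul_right _)

theorem dcb₁₀₀₀_succ_eq_sub (h : StraighteningRelations q u) (hq : q ≠ 0) :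
    ∀ m, dcb₁₀₀₀ q u (m + 1) = q ^ (m + 1) • (u 3 * dcb₀₀₀₀ q u (m + 1)) -
      q ^ (5 * m + 3) • (minor₁₂ q u * u 2 * dcb₀₀₀₀ q u m)
  | 0 => by simp [dcb₁₀₀₀, dcb₀₀₀₀]
  | 1 => by
    have hP := h.qCommute₃_minor₁₂_mul_minor₀₁ hq
    simp only [dcb₁₀₀₀, dcb₀₀₀₀, sub_mul, mul_sub, smul_mul_assoc, mul_smul_comm, mul_one, hP.eq]
    simp only [mul_assoc]
    module
  | m + 2 => by
    have hu₃ := (h.qCommute₃_minor₁₂_mul_minor₀₁ hq).left_comm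
    have hw := (h.minor₁₂_mul_u₂_qCommute_minor₁₂_mul_minor₀₁ hq).left_comm
    simp only [mul_assoc] at hu₃ hw
    rw [dcb₁₀₀₀, h.dcb₁₀₀₀_succ_eq_sub hq (m + 1), h.dcb₁₀₀₀_succ_eq_sub hq m]
    simp only [dcb₀₀₀₀, sub_mul, mul_sub, smul_mul_assoc, mul_smul_comm, mul_assoc, hu₃, hw]
    module

theorem dcb₁₀₀₀_qCommute_minor₁₂_mul_minor₀₁ (h : StraighteningRelations q u) (hq : q ≠ 0) :
    ∀ m, QCommute (q ^ 6) (dcb₁₀₀₀ q u m) (minor₁₂ q u * minor₀₁ q u)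
  | 0 => h.qCommute₃_minor₁₂_mul_minor₀₁ hq
  | 1 => by
    have hz := (h.minor₁₂_mul_minor₀₁_commute_minor₀₂ hq).eq
    have hu₃ := h.qCommute₃_minor₁₂_mul_minor₀₁ hq
    have hw := h.minor₁₂_mul_u₂_qCommute_minor₁₂_mul_minor₀₁ hq
    rw [QCommute, dcb₁₀₀₀, sub_mul, mul_sub, smul_mul_assoc, smul_mul_assoc, hw.eq, mul_assoc (u 3),
      ← hz, hu₃.left_comm]
    simp only [mul_smul_comm]
    module
  | m + 2 => by
    have hz := (h.minor₁₂_mul_minor₀₁_commute_minor₀₂ hq).eq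
    have ih₁ := h.dcb₁₀₀₀_qCommute_minor₁₂_mul_minor₀₁ hq (m + 1)
    have ih₀ := h.dcb₁₀₀₀_qCommute_minor₁₂_mul_minor₀₁ hq m
    rw [QCommute, dcb₁₀₀₀, sub_mul, mul_sub, smul_mul_assoc, smul_mul_assoc, mul_assoc _ _ (_ * _),
      mul_assoc _ _ (_ * _), ← hz, ih₁.left_comm, ih₀.eq]
    simp only [mul_smul_comm]
    module

theorem dcb₀₀₀₀_succ_eq_sub (h : StraighteningRelations q u) (hq : q ≠ 0) :
    ∀ m, dcb₀₀₀₀ q u (m + 1) = q ^ m • (dcb₁₀₀₀ q u m * u 0) -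
      q ^ (2 * m + 2) • (dcb₀₁₀₀ q u m * u 1)
  | 0 => by simp [dcb₁₀₀₀, dcb₀₀₀₀, dcb₀₁₀₀, minor₀₂]
  | 1 => by
    have hu₂ := congrArg (· * u 1) (h.minor₀₂_mul_u₂' hq)
    have hz := congrArg (minor₀₂ q u * ·) (minor₀₂.eq_def q u)
    have hp := congrArg (minor₁₂ q u * ·) (minor₀₁.eq_def q u)
    rw [h.dcb₁₀₀₀_one hq]
    simp only [add_mul, mul_sub, smul_mul_assoc, mul_smul_comm, mul_assoc] at hu₂ hz hp
    simp only [dcb₀₀₀₀, dcb₀₁₀₀, dcb₁₀₀₀, sub_mul, smul_mul_assoc, mul_one, mul_assoc]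
    linear_combination (norm := module) q ^ 4 • hz - q ^ 2 • hp - q ^ 4 • hu₂
  | m + 2 => by
    have hz := (h.minor₀₂_commute_dcb₀₀₀₀ hq (m + 2)).eq
    rw [dcb₀₀₀₀, ← hz, h.dcb₀₀₀₀_succ_eq_sub hq (m + 1), h.dcb₀₀₀₀_succ_eq_sub hq m,
      h.dcb₁₀₀₀_add_two hq, h.dcb₀₁₀₀_add_two hq]
    simp only [sub_mul, mul_sub, smul_mul_assoc, mul_smul_comm, mul_assoc]
    module

end StraighteningRelations

section Unitriangularity

variable {K R : Type*} [Field K] [Ring R] [Algebra K R] {q : K} {u : Fin 4 → R}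

theorem isUnitriangular_dcb₀₀₀₀_succ (h : StraighteningRelations q u) (hq : q ≠ 0) {m : ℕ}
    (hX : IsUnitriangular q (dualPBW q u) (m + 1, 0, 0, m) (dcb₁₀₀₀ q u m))
    (hZ : IsUnitriangular q (dualPBW q u) (m, 1, 0, m) (dcb₀₁₀₀ q u m)) :
    IsUnitriangular q (dualPBW q u) (m + 1, 0, 0, m + 1) (dcb₀₀₀₀ q u (m + 1)) := by
  have hmem := (hZ.mul_u₁ h hq).pow_succ_smul_mem (a := (m + 1, 0, 0, m + 1)) 1
    (mem_Sset_iff.2 ⟨1, 1, by simp⟩)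
  rw [smul_smul, ← pow_add] at hmem
  rw [h.dcb₀₀₀₀_succ_eq_sub hq, add_comm (2 * m)]
  exact hX.mul_u₀.sub hmem

theorem isUnitriangular_dcb₁₀₀₀_succ (h : StraighteningRelations q u) (hq : q ≠ 0) {m : ℕ}
    (hS : IsUnitriangular q (dualPBW q u) (m, 0, 0, m) (dcb₀₀₀₀ q u m))
    (hS' : IsUnitriangular q (dualPBW q u) (m + 1, 0, 0, m + 1) (dcb₀₀₀₀ q u (m + 1))) :
    IsUnitriangular q (dualPBW q u) (m + 2, 0, 0, m + 1) (dcb₁₀₀₀ q u (m + 1)) := by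
  have hmem := ((hS.u₂_mul h hq).minor₁₂_mul h hq).pow_succ_smul_mem (a := (m + 2, 0, 0, m + 1)) 0
    (mem_Sset_iff.2 ⟨1, 1, by simp⟩)
  simp only [Prod.mk_add_mk, add_zero, zero_add, mul_one, pow_one] at hmem
  have hcoef : q ^ (5 * m + 3) • (minor₁₂ q u * u 2 * dcb₀₀₀₀ q u m) =
      q • q ^ (3 * m + 2) • (minor₁₂ q u * q ^ (2 * m) • (u 2 * dcb₀₀₀₀ q u m)) := by
    rw [mul_smul_comm, mul_assoc]
    module
  rw [h.dcb₁₀₀₀_succ_eq_sub hq, hcoef]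
  exact hS'.u₃_mul.sub hmem

theorem isUnitriangular_dcb₀₁₀₀_succ (h : StraighteningRelations q u) (hq : q ≠ 0) {m : ℕ}
    (hX : IsUnitriangular q (dualPBW q u) (m + 1, 0, 0, m) (dcb₁₀₀₀ q u m)) :
    IsUnitriangular q (dualPBW q u) (m + 1, 1, 0, m + 1) (dcb₀₁₀₀ q u (m + 1)) := by
  have hexp : 4 * (m + 1) + 3 * 0 + 2 * 0 + m = 5 * m + 4 := by ring
  have hmul := hX.minor₀₁_mul h hq
  rwa [hexp] at hmul

theorem isUnitriangular_dcb (h : StraighteningRelations q u) (hq : q ≠ 0) (m : ℕ) :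
    IsUnitriangular q (dualPBW q u) (m, 0, 0, m) (dcb₀₀₀₀ q u m) ∧
    IsUnitriangular q (dualPBW q u) (m + 1, 0, 0, m) (dcb₁₀₀₀ q u m) ∧
    IsUnitriangular q (dualPBW q u) (m, 1, 0, m) (dcb₀₁₀₀ q u m) := by
  induction m with
  | zero =>
    refine ⟨?_, ?_, ?_⟩ <;>
      simp [IsUnitriangular, dualPBW, bexp, dcb₀₀₀₀, dcb₁₀₀₀, dcb₀₁₀₀]
  | succ m ih =>
    obtain ⟨hS, hX, hZ⟩ := ih
    have hS' := isUnitriangular_dcb₀₀₀₀_succ h hq hX hZ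
    exact ⟨hS', isUnitriangular_dcb₁₀₀₀_succ h hq hS hS', isUnitriangular_dcb₀₁₀₀_succ h hq hX⟩

theorem isUnitriangular_dcb₁₁₁₀ (h : StraighteningRelations q u) (hq : q ≠ 0) (m : ℕ) :
    IsUnitriangular q (dualPBW q u) (m + 1, 1, 1, m) (dcb₁₁₁₀ q u m) := by
  simpa [dcb₁₁₁₀] using (isUnitriangular_dcb h hq m).2.2.minor₁₂_mul h hq

end Unitriangularity

/-- `σ` is the anti-automorphism, semilinear over `q ↦ q⁻¹`, that scales each `uᵢ` by
`q²ⁱ`. -/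
structure IsBarAntiautomorphism {K R : Type*} [Field K] [Ring R] [Algebra K R] {bar : K →+* K}
    (q : K) (u : Fin 4 → R) (σ : R →ₛₗ[bar] R) : Prop where
  bar_q : bar q = q⁻¹
  map_mul : ∀ x y, σ (x * y) = σ y * σ x
  map_u : ∀ i, σ (u i) = q ^ (2 * (i : ℕ)) • u i

namespace IsBarAntiautomorphism

variable {K R : Type*} [Field K] [Ring R] [Algebra K R] {bar : K →+* K} {q : K} {u : Fin 4 → R}
  {σ : R →ₛₗ[bar] R}

theorem map_minor₀₁ (hσ : IsBarAntiautomorphism q u σ) (h : StraighteningRelations q u)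
    (hq : q ≠ 0) : σ (minor₀₁ q u) = q ^ 2 • minor₀₁ q u := by
  conv_rhs => rw [h.minor₀₁_eq hq]
  simp only [minor₀₁, map_sub, map_smulₛₗ, map_pow, hσ.bar_q, hσ.map_mul, hσ.map_u, Fin.isValue,
    Fin.coe_ofNat_eq_mod, smul_mul_assoc, mul_smul_comm]
  match_scalars <;> field_simp <;> ring

theorem map_minor₀₂ (hσ : IsBarAntiautomorphism q u σ) (h : StraighteningRelations q u)
    (hq : q ≠ 0) : σ (minor₀₂ q u) = q ^ 4 • minor₀₂ q u := by
  conv_rhs => rw [h.minor₀₂_eq hq]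
  simp only [minor₀₂, map_sub, map_smulₛₗ, map_pow, hσ.bar_q, hσ.map_mul, hσ.map_u, Fin.isValue,
    Fin.coe_ofNat_eq_mod, smul_mul_assoc, mul_smul_comm]
  match_scalars <;> field_simp <;> ring

theorem map_minor₁₂ (hσ : IsBarAntiautomorphism q u σ) (h : StraighteningRelations q u)
    (hq : q ≠ 0) : σ (minor₁₂ q u) = q ^ 6 • minor₁₂ q u := by
  conv_rhs => rw [h.minor₁₂_eq hq]
  simp only [minor₁₂, map_sub, map_smulₛₗ, map_pow, hσ.bar_q, hσ.map_mul, hσ.map_u, Fin.isValue,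
    Fin.coe_ofNat_eq_mod, smul_mul_assoc, mul_smul_comm]
  match_scalars <;> field_simp <;> ring

theorem map_dcb₁₁₁₀_zero (hσ : IsBarAntiautomorphism q u σ) (h : StraighteningRelations q u)
    (hq : q ≠ 0) : σ (dcb₁₁₁₀ q u 0) = q ^ 6 • dcb₁₁₁₀ q u 0 := by
  have hcomm : minor₁₂ q u * u 2 = u 2 * minor₁₂ q u := by
    simpa using h.minor₁₂_qCommute₂.eq
  rw [dcb₁₁₁₀, dcb₀₁₀₀, map_smulₛₗ, map_pow, hσ.bar_q, hσ.map_mul, hσ.map_u, hσ.map_minor₁₂ h hq,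
    hcomm]
  simp only [smul_mul_assoc, mul_smul_comm, Fin.val_two, inv_pow]
  match_scalars
  field_simp
  ring

theorem map_dcb₁₁₁₀_succ (hσ : IsBarAntiautomorphism q u σ) (h : StraighteningRelations q u)
    (hq : q ≠ 0) {m : ℕ} {χ : K} (hX : σ (dcb₁₀₀₀ q u m) = χ • dcb₁₀₀₀ q u m) :
    σ (dcb₁₁₁₀ q u (m + 1)) = (q⁻¹ ^ (16 * m + 8) * χ) • dcb₁₁₁₀ q u (m + 1) := by
  have hp : QCommute (q⁻¹ ^ 4) (minor₀₁ q u) (minor₁₂ q u) := by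
    simpa using (h.minor₁₂_qCommute_minor₀₁ hq).symm (pow_ne_zero 4 hq)
  rw [dcb₁₁₁₀_succ, map_smulₛₗ, map_pow, hσ.bar_q, hσ.map_mul, hσ.map_mul, hσ.map_minor₁₂ h hq,
    hσ.map_minor₀₁ h hq, hX]
  simp only [smul_mul_assoc, mul_smul_comm, inv_pow, hp.eq,
    (h.dcb₁₀₀₀_qCommute_minor₁₂_mul_minor₀₁ hq m).eq]
  match_scalars
  field_simp
  ring

theorem map_dcb₁₀₀₀_succ (hσ : IsBarAntiautomorphism q u σ) (h : StraighteningRelations q u)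
    (hq : q ≠ 0) {m : ℕ} {χ : K} (hX : σ (dcb₁₀₀₀ q u m) = (q ^ (8 * m) * χ) • dcb₁₀₀₀ q u m)
    (hY : σ (dcb₁₁₁₀ q u m) = χ • dcb₁₁₁₀ q u m) :
    σ (dcb₁₀₀₀ q u (m + 1)) = χ • dcb₁₀₀₀ q u (m + 1) := by
  have hσX := congrArg σ (h.q_smul_dcb₁₀₀₀_succ hq m)
  rw [map_sub, map_smulₛₗ, map_smulₛₗ, map_pow, hσ.bar_q, hσ.map_mul, hX, hY,
    hσ.map_minor₀₂ h hq, inv_smul_eq_iff₀ hq] at hσX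
  rw [hσX, dcb₁₀₀₀_succ]
  simp only [smul_mul_assoc, mul_smul_comm, inv_pow]
  match_scalars <;> field_simp
  ring

theorem map_dcb (hσ : IsBarAntiautomorphism q u σ) (h : StraighteningRelations q u)
    (hq : q ≠ 0) (m : ℕ) :
    σ (dcb₁₀₀₀ q u m) = q ^ (-Nnum (m + 1, 0, 0, m)) • dcb₁₀₀₀ q u m ∧
    σ (dcb₁₁₁₀ q u m) = q ^ (-Nnum (m + 1, 1, 1, m)) • dcb₁₁₁₀ q u m := by
  induction m with
  | zero => simpa [Nnum, dcb₁₀₀₀] using And.intro (hσ.map_u 3) (hσ.map_dcb₁₁₁₀_zero h hq)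
  | succ m ih =>
    obtain ⟨hX, hY⟩ := ih
    have hNX : Nnum (m + 1 + 1, 0, 0, m + 1) = Nnum (m + 1, 1, 1, m) := by
      simp only [Nnum]
      push_cast
      ring
    have hNY : -Nnum (m + 1, 0, 0, m) = (8 * m : ℕ) + -Nnum (m + 1, 1, 1, m) := by
      simp only [Nnum]
      push_cast
      ring
    have hNY' : -Nnum (m + 1 + 1, 1, 1, m + 1) =
        -((16 * m + 8 : ℕ) : ℤ) + -Nnum (m + 1, 0, 0, m) := by
      simp only [Nnum]
      push_cast
      ring
    constructor
    · rw [hNX]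
      rw [hNY, zpow_add₀ hq, zpow_natCast] at hX
      exact hσ.map_dcb₁₀₀₀_succ h hq hX hY
    · rw [hσ.map_dcb₁₁₁₀_succ h hq hX, hNY', zpow_add₀ hq,
        ← inv_zpow' q (16 * m + 8 : ℕ), zpow_natCast]

end IsBarAntiautomorphism

/-- `B` is the dual canonical basis attached to the root vectors `u` and the anti-automorphism `σ`:
each `B a` is unitriangular over the dual PBW basis and a `σ`-eigenvector of weight `-N(a)`. -/
structure IsDualCanonicalBasis {K R : Type*} [Field K] [Ring R] [Algebra K R] {bar : K →+* K}
    (q : K) (u : Fin 4 → R) (σ : R →ₛₗ[bar] R) (B : Idx → R) : Prop where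
  isUnitriangular : ∀ a, IsUnitriangular q (dualPBW q u) a (B a)
  map_eq : ∀ a, σ (B a) = q ^ (-Nnum a) • B a

section ProductFormulas

variable {K R : Type*} [Field K] [Ring R] [Algebra K R] {bar : K →+* K} {q : K} {u : Fin 4 → R}
  {σ : R →ₛₗ[bar] R} {B : Idx → R}

theorem linearIndependent_dualPBW (hq : q ≠ 0) (hPBW : LinearIndependent K fun a : Idx =>
      u 3 ^ a.1 * u 2 ^ a.2.1 * u 1 ^ a.2.2.1 * u 0 ^ a.2.2.2) :
    LinearIndependent K (dualPBW q u) :=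
  hPBW.units_smul fun a => Units.mk0 (q ^ bexp a) (pow_ne_zero _ hq)

namespace IsDualCanonicalBasis

theorem eq_of_isUnitriangular (hB : IsDualCanonicalBasis q u σ B) (hq : Transcendental ℤ q)
    (hbar : bar q = q⁻¹) (hE : LinearIndependent K (dualPBW q u)) {a : Idx} {x : R}
    (hx : IsUnitriangular q (dualPBW q u) a x) (hσx : σ x = q ^ (-Nnum a) • x) : B a = x := by
  have hq₀ := ne_zero_of_transcendental hq
  refine (eq_of_unitriangular_of_semilinear hq hbar σ (fun _ _ => Sset_subset)
    (fun _ _ => add_lt_add_of_mem_Sset) hE hB.isUnitriangular (fun a => zpow_ne_zero (-Nnum a) hq₀)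
    (fun a b hb => ?_) hB.map_eq hx hσx).symm
  rw [Nnum_eq_of_mem_Sset hb]

theorem eq_dcb₁₀₀₀ (hB : IsDualCanonicalBasis q u σ B) (hq : Transcendental ℤ q)
    (hu : StraighteningRelations q u) (hE : LinearIndependent K (dualPBW q u))
    (hσ : IsBarAntiautomorphism q u σ) (m : ℕ) : B (m + 1, 0, 0, m) = dcb₁₀₀₀ q u m :=
  have hq₀ := ne_zero_of_transcendental hq
  hB.eq_of_isUnitriangular hq hσ.bar_q hE (isUnitriangular_dcb hu hq₀ m).2.1
    (hσ.map_dcb hu hq₀ m).1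

theorem eq_dcb₁₁₁₀ (hB : IsDualCanonicalBasis q u σ B) (hq : Transcendental ℤ q)
    (hu : StraighteningRelations q u) (hE : LinearIndependent K (dualPBW q u))
    (hσ : IsBarAntiautomorphism q u σ) (m : ℕ) : B (m + 1, 1, 1, m) = dcb₁₁₁₀ q u m :=
  have hq₀ := ne_zero_of_transcendental hq
  hB.eq_of_isUnitriangular hq hσ.bar_q hE (isUnitriangular_dcb₁₁₁₀ hu hq₀ m)
    (hσ.map_dcb hu hq₀ m).2

theorem eq_minor₀₂ (hB : IsDualCanonicalBasis q u σ B) (hq : Transcendental ℤ q)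
    (hu : StraighteningRelations q u) (hE : LinearIndependent K (dualPBW q u))
    (hσ : IsBarAntiautomorphism q u σ) : B (1, 0, 0, 1) = minor₀₂ q u := by
  have hq₀ := ne_zero_of_transcendental hq
  have hmap : σ (minor₀₂ q u) = q ^ (-Nnum (1, 0, 0, 1)) • minor₀₂ q u := by
    rw [hσ.map_minor₀₂ hu hq₀, ← zpow_natCast]
    rfl
  exact hB.eq_of_isUnitriangular hq hσ.bar_q hE (isUnitriangular_dcb hu hq₀ 1).1 hmap

end IsDualCanonicalBasis

theorem stmt13_general (hq : Transcendental ℤ q) (hu : StraighteningRelations q u)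
    (hPBW : LinearIndependent K fun a : Idx =>
      u 3 ^ a.1 * u 2 ^ a.2.1 * u 1 ^ a.2.2.1 * u 0 ^ a.2.2.2)
    (hσ : IsBarAntiautomorphism q u σ) (hB : IsDualCanonicalBasis q u σ B) (n : ℕ) :
    B (n + 1, 0, 0, n) * B (1, 0, 0, 1) =
        q⁻¹ ^ (4 * n + 1) • B (n + 2, 0, 0, n + 1) + q⁻¹ ^ (4 * n) • B (n + 1, 1, 1, n) ∧
    B (1, 0, 0, 1) * B (n + 1, 0, 0, n) =
        q⁻¹ ^ (4 * n + 3) • B (n + 2, 0, 0, n + 1) +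
          q⁻¹ ^ (4 * n + 4) • B (n + 1, 1, 1, n) := by
  have hq₀ := ne_zero_of_transcendental hq
  have hE := linearIndependent_dualPBW hq₀ hPBW
  have hX := hB.eq_dcb₁₀₀₀ hq hu hE hσ
  rw [hX n, hX (n + 1), hB.eq_dcb₁₁₁₀ hq hu hE hσ, hB.eq_minor₀₂ hq hu hE hσ]
  exact ⟨dcb₁₀₀₀_mul_minor₀₂_eq_add u hq₀ n, hu.minor₀₂_mul_dcb₁₀₀₀_eq_add hq₀ n⟩

end ProductFormulas

/-! ### Straightening relations from the Serre relations -/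

theorem not_isOfFinOrder_of_transcendental {K : Type*} [Field K] {q : K}
    (hq : Transcendental ℤ q) : ¬ IsOfFinOrder q := fun h =>
  let ⟨_, hn, hqn⟩ := isOfFinOrder_iff_pow_eq_one.1 h
  hq.pow hn (hqn ▸ isAlgebraic_one)

theorem transcendental_int_of_transcendental_rat {K : Type*} [Field K] {_ : Algebra ℚ K} {q : K}
    (hq : Transcendental ℚ q) : Transcendental ℤ q :=
  mt (IsFractionRing.isAlgebraic_iff ℤ ℚ K).1 hq

-- The instance is named because `RatFunc` carries a second `ℤ`-algebra structure.
theorem transcendental_int_qq : @Transcendental ℤ F _ _ (Ring.toIntAlgebra F) qq :=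
  transcendental_int_of_transcendental_rat RatFunc.transcendental_X

section Commutators

attribute [local instance] LieRing.ofAssociativeRing

section Lie

variable {K R : Type*} [Field K] [Ring R] [Algebra K R] {q t : K} {A G x : R}

theorem lie_mul_right (A x y : R) : ⁅A, x * y⁆ = ⁅A, x⁆ * y + x * ⁅A, y⁆ := by
  simp only [Ring.lie_def]
  noncomm_ring

theorem lie_lie_comm_of_commute (hG : Commute G A) (x : R) : ⁅G, ⁅A, x⁆⁆ = ⁅A, ⁅G, x⁆⁆ := by
  rw [leibniz_lie, hG.lie_eq, zero_lie, zero_add]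

theorem mul_lie_lie_of_qCommute (hx : QCommute t x ⁅A, x⁆) :
    x * ⁅A, ⁅A, x⁆⁆ = t • (⁅A, ⁅A, x⁆⁆ * x) + (t - 1) • (⁅A, x⁆ * ⁅A, x⁆) := by
  have hAx := congrArg (⁅A, ·⁆) hx.eq
  simp only [lie_mul_right, LieAlgebra.lie_smul] at hAx
  linear_combination (norm := module) hAx

-- Compare `G` applied to the relation with the square of `A` applied to it.
theorem lie_qCommute_lie_lie (h2 : (2 : K) ≠ 0) (hGA : Commute G A) (hGx : ⁅G, x⁆ = ⁅A, ⁅A, x⁆⁆)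
    (hx : QCommute t x ⁅A, x⁆) : QCommute t ⁅A, x⁆ ⁅A, ⁅A, x⁆⁆ := by
  have hAAx := congrArg (⁅A, ⁅A, ·⁆⁆) hx.eq
  have hG := congrArg (⁅G, ·⁆) hx.eq
  simp only [lie_mul_right, LieAlgebra.lie_smul, lie_add] at hAAx
  simp only [lie_mul_right, LieAlgebra.lie_smul, lie_lie_comm_of_commute hGA, hGx] at hG
  have htwice : (2 : K) • (⁅A, x⁆ * ⁅A, ⁅A, x⁆⁆ - t • (⁅A, ⁅A, x⁆⁆ * ⁅A, x⁆)) = 0 := by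
    linear_combination (norm := module) hAAx - hG
  exact sub_eq_zero.1 ((smul_eq_zero.1 htwice).resolve_left h2)

theorem mul_lie_lie_lie (h2 : (2 : K) ≠ 0) (hGA : Commute G A) (hGx : ⁅G, x⁆ = ⁅A, ⁅A, x⁆⁆)
    (hx : QCommute t x ⁅A, x⁆) :
    x * ⁅A, ⁅A, ⁅A, x⁆⁆⁆ =
      t • (⁅A, ⁅A, ⁅A, x⁆⁆⁆ * x) + (t ^ 2 - 1) • (⁅A, ⁅A, x⁆⁆ * ⁅A, x⁆) := by
  have hG := congrArg (⁅G, ·⁆) hx.eq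
  simp only [lie_mul_right, LieAlgebra.lie_smul, lie_lie_comm_of_commute hGA, hGx] at hG
  rw [(lie_qCommute_lie_lie h2 hGA hGx hx).eq] at hG
  linear_combination (norm := module) hG

theorem straighteningRelations_lie (h2 : (2 : K) ≠ 0) (hGA : Commute G A)
    (hGx : ⁅G, x⁆ = ⁅A, ⁅A, x⁆⁆) (hx : QCommute (q⁻¹ ^ 2) x ⁅A, x⁆) :
    StraighteningRelations q ![x, ⁅A, x⁆, ⁅A, ⁅A, x⁆⁆, ⁅A, ⁅A, ⁅A, x⁆⁆⁆] :=
  have hGAx : ⁅G, ⁅A, x⁆⁆ = ⁅A, ⁅A, ⁅A, x⁆⁆⁆ := by rw [lie_lie_comm_of_commute hGA, hGx]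
  have hAx := lie_qCommute_lie_lie h2 hGA hGx hx
  { qCommute₀₁ := hx
    qCommute₁₂ := hAx
    qCommute₂₃ := lie_qCommute_lie_lie h2 hGA hGAx hAx
    mul₀₂ := mul_lie_lie_of_qCommute hx
    mul₁₃ := mul_lie_lie_of_qCommute hAx
    mul₀₃ := (mul_lie_lie_lie h2 hGA hGx hx).trans (by rw [← pow_mul]; rfl) }

end Lie

section Serre

variable {K R : Type*} [Field K] [Ring R] [Algebra K R] {q t : K} {a b : R}

/-- The quantized Serre relation between `a` and `b` for the affine Cartan integer `-2`. -/
def QuantumSerre (q : K) (a b : R) : Prop :=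
  a ^ 3 * b - (q ^ 2 + 1 + q⁻¹ ^ 2) • (a ^ 2 * b * a) + (q ^ 2 + 1 + q⁻¹ ^ 2) • (a * b * a ^ 2)
    - b * a ^ 3 = 0

theorem QuantumSerre.clear_denominators (h : QuantumSerre q a b) (hq : q ≠ 0)
    (ht : t = q⁻¹ ^ 2) :
    t • (a * (a * (a * b))) - (1 + t + t ^ 2) • (a * (a * (b * a)))
      + (1 + t + t ^ 2) • (a * (b * (a * a))) - t • (b * (a * (a * a))) = 0 := by
  have hcoeff : 1 + t + t ^ 2 = t * (q ^ 2 + 1 + q⁻¹ ^ 2) := by rw [ht]; field_simp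
  rw [QuantumSerre] at h
  simp only [pow_succ a, pow_zero, one_mul, mul_assoc] at h
  rw [hcoeff]
  linear_combination (norm := module) t • h

/-- Up to a scalar, the imaginary root vector `A` of weight `δ`, where `t = q⁻²`. -/
def imaginaryRootVector (t : K) (a b : R) : R := b * a - t • (a * b)

/-- Up to a scalar, the imaginary root vector of weight `2δ`, where `t = q⁻²`. -/
def imaginaryRootVector₂ (t : K) (a b : R) : R :=
  -(2 * t ^ 3) • (a * (a * (b * b))) + (t ^ 2 * (1 + t) ^ 2) • (a * (b * (a * b)))
    + (t - t ^ 3) • (a * (b * (b * a))) + (t - t ^ 3) • (b * (a * (a * b)))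
    - (1 + t) ^ 2 • (b * (a * (b * a))) + (2 * t) • (b * (b * (a * a)))

theorem QuantumSerre.qCommute_lie_imaginaryRootVector (h : QuantumSerre q a b) (hq : q ≠ 0) :
    QCommute (q⁻¹ ^ 2) a ⁅imaginaryRootVector (q⁻¹ ^ 2) a b, a⁆ := by
  have hserre := h.clear_denominators hq rfl
  simp only [QCommute, Ring.lie_def, imaginaryRootVector, mul_sub, sub_mul, mul_smul_comm,
    smul_mul_assoc, smul_sub, mul_assoc]
  linear_combination (norm := module) hserre

theorem QuantumSerre.lie_imaginaryRootVector₂ (h : QuantumSerre q a b) (hq : q ≠ 0)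
    (ht : t = q⁻¹ ^ 2) :
    ⁅imaginaryRootVector₂ t a b, a⁆ =
      (1 + t ^ 2) • ⁅imaginaryRootVector t a b, ⁅imaginaryRootVector t a b, a⁆⁆ := by
  have hserre := h.clear_denominators hq ht
  have hmul := congrArg (· * b) hserre
  have hmul' := congrArg (b * ·) hserre
  simp only [mul_add, add_mul, mul_sub, sub_mul, mul_assoc, smul_mul_assoc, mul_smul_comm,
    zero_mul, mul_zero] at hmul hmul'
  simp only [Ring.lie_def, imaginaryRootVector₂, imaginaryRootVector, mul_add, add_mul, mul_sub,
    sub_mul, mul_assoc, smul_mul_assoc, mul_smul_comm]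
  linear_combination (norm := module) (2 * t ^ 2) • hmul - (2 : K) • hmul'

theorem QuantumSerre.commute_imaginaryRootVector₂ (hab : QuantumSerre q a b)
    (hba : QuantumSerre q b a) (hq : q ≠ 0) (ht : t = q⁻¹ ^ 2) (ht3 : 1 + t + t ^ 2 ≠ 0) :
    Commute (imaginaryRootVector₂ t a b) (imaginaryRootVector t a b) := by
  have hserre := hab.clear_denominators hq ht
  have hserre' := hba.clear_denominators hq ht
  have e₁ := congrArg (· * (b * b)) hserre
  have e₂ := congrArg (fun x => b * (x * b)) hserre
  have e₃ := congrArg (fun x => b * (b * x)) hserre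
  have f₁ := congrArg (· * (a * a)) hserre'
  have f₂ := congrArg (fun x => a * (x * a)) hserre'
  have f₃ := congrArg (fun x => a * (a * x)) hserre'
  simp only [mul_add, add_mul, mul_sub, sub_mul, mul_assoc, smul_mul_assoc, mul_smul_comm,
    zero_mul, mul_zero] at e₁ e₂ e₃ f₁ f₂ f₃
  have hzero : (1 + t + t ^ 2) •
      ⁅imaginaryRootVector₂ t a b, imaginaryRootVector t a b⁆ = 0 := by
    simp only [Ring.lie_def, imaginaryRootVector₂, imaginaryRootVector, mul_add, add_mul, mul_sub,
      sub_mul, mul_assoc, smul_mul_assoc, mul_smul_comm]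
    linear_combination (norm := module) (-2 * t ^ 4) • (e₁ + f₃)
      + (2 * t ^ 2 + 2 * t ^ 3) • (e₂ + f₂) - (2 * t) • (e₃ + f₁)
  exact commute_iff_lie_eq.2 ((smul_eq_zero.1 hzero).resolve_left ht3)

theorem one_add_sq_inv_sq_ne_zero (hq : q ≠ 0) (hq1 : ¬ IsOfFinOrder q) :
    1 + (q⁻¹ ^ 2) ^ 2 ≠ 0 := by
  intro hzero
  refine hq1 (isOfFinOrder_iff_pow_eq_one.2 ⟨8, by norm_num, ?_⟩)
  field_simp at hzero
  linear_combination (q ^ 4 - 1) * hzero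

theorem one_add_inv_sq_add_sq_inv_sq_ne_zero (hq : q ≠ 0) (hq1 : ¬ IsOfFinOrder q) :
    1 + q⁻¹ ^ 2 + (q⁻¹ ^ 2) ^ 2 ≠ 0 := by
  intro hzero
  refine hq1 (isOfFinOrder_iff_pow_eq_one.2 ⟨6, by norm_num, ?_⟩)
  field_simp at hzero
  linear_combination (q ^ 2 - 1) * hzero

theorem QuantumSerre.straighteningRelations (hab : QuantumSerre q a b) (hba : QuantumSerre q b a)
    (hq : q ≠ 0) (hq1 : ¬ IsOfFinOrder q) (h2 : (2 : K) ≠ 0) {A : R} {s : K}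
    (hA : A = s • imaginaryRootVector (q⁻¹ ^ 2) a b) :
    StraighteningRelations q ![a, ⁅A, a⁆, ⁅A, ⁅A, a⁆⁆, ⁅A, ⁅A, ⁅A, a⁆⁆⁆] := by
  subst hA
  have ht2 := one_add_sq_inv_sq_ne_zero hq hq1
  have ht3 := one_add_inv_sq_add_sq_inv_sq_ne_zero hq hq1
  apply straighteningRelations_lie
    (G := (s ^ 2 * (1 + (q⁻¹ ^ 2) ^ 2)⁻¹) • imaginaryRootVector₂ (q⁻¹ ^ 2) a b) h2
  · exact ((hab.commute_imaginaryRootVector₂ hba hq rfl ht3).smul_left _).smul_right _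
  · rw [smul_lie, hab.lie_imaginaryRootVector₂ hq rfl, smul_smul, inv_mul_cancel_right₀ ht2]
    simp only [smul_lie, LieAlgebra.lie_smul, smul_smul, sq]
  · rw [smul_lie]
    exact (hab.qCommute_lie_imaginaryRootVector hq).smul_right s

theorem QuantumSerre.straighteningRelations_smul (hab : QuantumSerre q a b)
    (hba : QuantumSerre q b a) (hq : q ≠ 0) (hq1 : ¬ IsOfFinOrder q) (h2 : (2 : K) ≠ 0) {A : R}
    {s : K} (hA : A = s • imaginaryRootVector (q⁻¹ ^ 2) a b) (k : K) :
    StraighteningRelations q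
      ![a, k ^ 2 • ⁅A, a⁆, k ^ 4 • ⁅A, ⁅A, a⁆⁆, k ^ 6 • ⁅A, ⁅A, ⁅A, a⁆⁆⁆] := by
  have hkA : k ^ 2 • A = (k ^ 2 * s) • imaginaryRootVector (q⁻¹ ^ 2) a b := by
    rw [hA, smul_smul]
  simpa only [smul_lie, LieAlgebra.lie_smul, smul_smul, ← pow_add] using
    hab.straighteningRelations hba hq hq1 h2 hkA

end Serre

theorem qq_ne_zero : qq ≠ 0 := RatFunc.X_ne_zero

theorem quantumSerre_E1_E2 : QuantumSerre qq E1 E2 := by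
  simpa only [map_sub, map_add, map_mul, map_smul, map_pow, map_zero, QuantumSerre, E1, E2,
    box3] using RingQuot.mkAlgHom_rel F SerreRel.rel1

theorem quantumSerre_E2_E1 : QuantumSerre qq E2 E1 := by
  simpa only [map_sub, map_add, map_mul, map_smul, map_pow, map_zero, QuantumSerre, E1, E2,
    box3] using RingQuot.mkAlgHom_rel F SerreRel.rel2

theorem straighteningRelations_u : StraighteningRelations qq ![u0, u1, u2, u3] :=
  quantumSerre_E1_E2.straighteningRelations_smul quantumSerre_E2_E1 qq_ne_zero
    (not_isOfFinOrder_of_transcendental transcendental_int_qq) two_ne_zero rfl _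

theorem straighteningRelations_us : StraighteningRelations qq ![us0, us1, us2, us3] :=
  have h := straighteningRelations_u
  ⟨Subtype.ext h.qCommute₀₁, Subtype.ext h.qCommute₁₂, Subtype.ext h.qCommute₂₃,
    Subtype.ext h.mul₀₂, Subtype.ext h.mul₁₃, Subtype.ext h.mul₀₃⟩

end Commutators

/-! ### Specialization to `U` -/

theorem Bz_natCast (B : Idx → Sgen) (a b c d : ℕ) :
    Bz B ((a : ℤ), (b : ℤ), (c : ℤ), (d : ℤ)) = B (a, b, c, d) := by
  simp [Bz]

theorem SigmaHyp.exists_isBarAntiautomorphism {bar : F →+* F} {σ : Sgen → Sgen}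
    (hσ : SigmaHyp bar σ) :
    ∃ σ' : Sgen →ₛₗ[bar] Sgen, ⇑σ' = σ ∧ IsBarAntiautomorphism qq ![us0, us1, us2, us3] σ' := by
  obtain ⟨hbar, -, hadd, hmul, hsmul, h₀, h₁, h₂, h₃⟩ := hσ
  refine ⟨{ toFun := σ, map_add' := hadd, map_smul' := hsmul }, rfl, hbar, hmul, fun i => ?_⟩
  fin_cases i
  exacts [h₀.trans (one_smul F us0).symm, h₁, h₂, h₃]

theorem DCB.isDualCanonicalBasis {bar : F →+* F} {σ : Sgen →ₛₗ[bar] Sgen} {B : Idx → Sgen}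
    (hB : DCB bar σ B) : IsDualCanonicalBasis qq ![us0, us1, us2, us3] σ B where
  isUnitriangular a := by
    obtain ⟨⟨φ, hφ, hsum⟩, -⟩ := hB a
    exact isUnitriangular_of_sub_eq_sum hφ hsum
  map_eq a := (hB a).2

theorem inv_pow_eq_zpow {K : Type*} [DivisionRing K] (q : K) {i : ℕ} {k : ℤ} (h : k = -i) :
    q⁻¹ ^ i = q ^ k := by
  rw [h, ← inv_zpow', zpow_natCast]

/-- For every integer `n ≥ 1` the dual canonical basis elements satisfy the product
expansions `B[n,0,0,n−1]·B[1,0,0,1] = q^{3−4n} B[n+1,0,0,n] + q^{4−4n} B[n,1,1,n−1]`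
and `B[1,0,0,1]·B[n,0,0,n−1] = q^{1−4n} B[n+1,0,0,n] + q^{−4n} B[n,1,1,n−1]`. -/
theorem stmt13 (bar : F →+* F) (σ : Sgen → Sgen) (B : Idx → Sgen)
    (hPBW : LinearIndependent F mon) (hσ : SigmaHyp bar σ) (hB : DCB bar σ B) (n : ℕ) (hn : 1 ≤ n) :
    Bz B ((n : ℤ), 0, 0, (n : ℤ) - 1) * Bz B (1, 0, 0, 1)
        = qq ^ (3 - 4 * (n : ℤ)) • Bz B ((n : ℤ) + 1, 0, 0, (n : ℤ))
          + qq ^ (4 - 4 * (n : ℤ)) • Bz B ((n : ℤ), 1, 1, (n : ℤ) - 1) ∧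
    Bz B (1, 0, 0, 1) * Bz B ((n : ℤ), 0, 0, (n : ℤ) - 1)
        = qq ^ (1 - 4 * (n : ℤ)) • Bz B ((n : ℤ) + 1, 0, 0, (n : ℤ))
          + qq ^ (-4 * (n : ℤ)) • Bz B ((n : ℤ), 1, 1, (n : ℤ) - 1) := by
  obtain ⟨m, rfl⟩ := Nat.exists_eq_add_of_le' hn
  obtain ⟨σ, rfl, hσbar⟩ := hσ.exists_isBarAntiautomorphism
  have hproduct := stmt13_general transcendental_int_qq straighteningRelations_us hPBW hσbar
    hB.isDualCanonicalBasis m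
  have hpred : ((m + 1 : ℕ) : ℤ) - 1 = m := by simp
  rw [← inv_pow_eq_zpow qq (i := 4 * m + 1) (by push_cast; ring),
    ← inv_pow_eq_zpow qq (i := 4 * m) (by push_cast; ring),
    ← inv_pow_eq_zpow qq (i := 4 * m + 3) (by push_cast; ring),
    ← inv_pow_eq_zpow qq (i := 4 * m + 4) (by push_cast; ring), hpred]
  simp only [← Bz_natCast] at hproduct
  exact_mod_cast hproduct
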